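/- arXiv:math/0309201 — 3 statements merged into one kernel-verified Lean document; each statement's English description precedes it below -/
import Mathlib

section
/- Both y₁(q) = q^{11/60}∏_{n≥0}1/((1-q^{5n+2})(1-q^{5n+3})) and y₂(q) = q^{-1/60}∏_{n≥0}1/((1-q^{5n+1})(1-q^{5n+4})) satisfy the second-order ODE (q d/dq)²F + 2Ẽ₂(q)(q d/dq)F - (11/5)Ẽ₄(q)F = 0, where Ẽ₂(q) = -1/12 + 2∑_{n≥1}σ₁(n)q^n and Ẽ₄(q) = 1/720 + (1/3)∑_{n≥1}σ₃(n)q^n. -/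
open scoped BigOperators Real

open Complex

/-!
Taking logarithms of the product gives `q dy/dq = L y` with
`L = κ + ∑ (∑_{d ∣ n, d ≡ ±k mod 5} d) qⁿ`, so the equation for `y` is the Riccati equation
`q dL/dq + L² + 2 Ẽ₂ L = (11/5) Ẽ₄`. Writing `M = L + Ẽ₂` and completing the square, this follows
from evaluations of `M²` and `Ẽ₂²`, that is, of convolutions of (weighted) divisor sums.

Both convolutions are found by Liouville's elementary method. The substitution
`(a, x, b, y) ↦ (a - b, x, b, x + y)` preserves `a x + b y`; hence if a symmetric `g` is a
coboundary, `g (a + b) b = h (a + b) b - h a b` with `h` symmetric, then the sum of `g a b` over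
the positive solutions of `a x + b y = n` telescopes to a sum over the divisors of `n`.
-/

section BilinearSolutions

open Finset

/-- The solutions of `a * x + b * y = n` in positive integers, encoded as `((a, x), (b, y))`.
Liouville's method evaluates sums over this set. -/
def bilinearSolutions (n : ℕ) : Finset ((ℕ × ℕ) × (ℕ × ℕ)) :=
  (antidiagonal n).biUnion fun p ↦ p.1.divisorsAntidiagonal ×ˢ p.2.divisorsAntidiagonal

lemma mem_bilinearSolutions {n a x b y : ℕ} :
    ((a, x), (b, y)) ∈ bilinearSolutions n ↔
      a * x + b * y = n ∧ 0 < a ∧ 0 < x ∧ 0 < b ∧ 0 < y := by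
  simp only [bilinearSolutions, mem_biUnion, HasAntidiagonal.mem_antidiagonal, mem_product,
    Nat.mem_divisorsAntidiagonal, Prod.exists]
  constructor
  · rintro ⟨i, j, rfl, ⟨rfl, hi⟩, rfl, hj⟩
    simp only [ne_eq, mul_eq_zero, not_or] at hi hj
    omega
  · rintro ⟨h, ha, hx, hb, hy⟩
    exact ⟨_, _, h, ⟨rfl, by positivity⟩, rfl, by positivity⟩

lemma sum_antidiagonal_sum_divisors_mul {R : Type*} [NonUnitalNonAssocSemiring R]
    (u v : ℕ → R) (n : ℕ) :
    ∑ p ∈ antidiagonal n, (∑ d ∈ p.1.divisors, u d) * (∑ d ∈ p.2.divisors, v d) =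
      ∑ s ∈ bilinearSolutions n, u s.1.1 * v s.2.1 := by
  rw [bilinearSolutions, sum_biUnion]
  · refine sum_congr rfl fun p _ ↦ ?_
    rw [← Nat.sum_divisorsAntidiagonal fun d _ ↦ u d,
      ← Nat.sum_divisorsAntidiagonal fun d _ ↦ v d, sum_mul_sum, sum_product]
  · rintro ⟨i, j⟩ - ⟨i', j'⟩ - hne
    refine disjoint_left.mpr ?_
    rintro ⟨⟨a, x⟩, b, y⟩ h h'
    simp only [mem_product, Nat.mem_divisorsAntidiagonal] at h h'
    exact hne (by rw [← h.1.1, ← h.2.1, ← h'.1.1, ← h'.2.1])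

section AddCommMonoid

variable {M : Type*} [AddCommMonoid M]

lemma sum_bilinearSolutions_swap (p : (ℕ × ℕ) × (ℕ × ℕ) → Prop) [DecidablePred p]
    (f : (ℕ × ℕ) × (ℕ × ℕ) → M) (n : ℕ) :
    ∑ s ∈ bilinearSolutions n with p s, f s =
      ∑ s ∈ bilinearSolutions n with p s.swap, f s.swap := by
  refine (sum_equiv (Equiv.prodComm _ _) ?_ fun _ _ ↦ rfl).symm
  rintro ⟨⟨a, x⟩, b, y⟩
  simp only [Equiv.prodComm_apply, Prod.swap_prod_mk, mem_filter, mem_bilinearSolutions]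
  grind

lemma sum_bilinearSolutions_transpose (p : (ℕ × ℕ) × (ℕ × ℕ) → Prop) [DecidablePred p]
    (f : (ℕ × ℕ) × (ℕ × ℕ) → M) (n : ℕ) :
    ∑ s ∈ bilinearSolutions n with p s, f s =
      ∑ s ∈ bilinearSolutions n with p (s.1.swap, s.2.swap), f (s.1.swap, s.2.swap) := by
  refine (sum_equiv ((Equiv.prodComm _ _).prodCongr (Equiv.prodComm _ _)) ?_ fun _ _ ↦ rfl).symm
  rintro ⟨⟨a, x⟩, b, y⟩
  simp only [Equiv.prodCongr_apply, Prod.map_apply, Equiv.prodComm_apply, Prod.swap_prod_mk,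
    mem_filter, mem_bilinearSolutions]
  grind

lemma sum_bilinearSolutions_lt_comm (pr : ℕ × ℕ → ℕ) {f : (ℕ × ℕ) × (ℕ × ℕ) → M}
    (hf : ∀ s, f s.swap = f s) (n : ℕ) :
    ∑ s ∈ bilinearSolutions n with pr s.1 < pr s.2, f s =
      ∑ s ∈ bilinearSolutions n with pr s.2 < pr s.1, f s := by
  simp only [sum_bilinearSolutions_swap (fun s ↦ pr s.1 < pr s.2), hf, Prod.fst_swap,
    Prod.snd_swap]

lemma sum_bilinearSolutions_eq_two_nsmul_add (pr : ℕ × ℕ → ℕ) {f : (ℕ × ℕ) × (ℕ × ℕ) → M}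
    (hf : ∀ s, f s.swap = f s) (n : ℕ) :
    ∑ s ∈ bilinearSolutions n, f s =
      2 • ∑ s ∈ bilinearSolutions n with pr s.2 < pr s.1, f s +
        ∑ s ∈ bilinearSolutions n with pr s.1 = pr s.2, f s := by
  rw [two_nsmul]
  nth_rw 1 [← sum_bilinearSolutions_lt_comm pr hf]
  simp only [sum_filter, ← sum_add_distrib]
  refine sum_congr rfl fun s _ ↦ ?_
  rcases lt_trichotomy (pr s.1) (pr s.2) with hs | hs | hs
  · simp [hs, hs.ne, hs.not_gt]
  · simp [hs]
  · simp [hs, hs.ne', hs.not_gt]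

lemma sum_bilinearSolutions_fst_sub (h : ℕ → ℕ → M) (n : ℕ) :
    ∑ s ∈ bilinearSolutions n with s.2.1 < s.1.1, h (s.1.1 - s.2.1) s.2.1 =
      ∑ s ∈ bilinearSolutions n with s.1.2 < s.2.2, h s.1.1 s.2.1 := by
  refine sum_nbij' (fun s ↦ ((s.1.1 - s.2.1, s.1.2), (s.2.1, s.1.2 + s.2.2)))
    (fun s ↦ ((s.1.1 + s.2.1, s.1.2), (s.2.1, s.2.2 - s.1.2))) ?_ ?_ ?_ ?_ ?_
  all_goals
    rintro ⟨⟨a, x⟩, b, y⟩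
    simp only [mem_filter, mem_bilinearSolutions, Prod.mk.injEq, and_true, true_and]
    rintro ⟨⟨rfl, ha, hx, hb, hy⟩, hlt⟩
  · refine ⟨⟨?_, by omega, hx, hb, by omega⟩, by omega⟩
    rw [mul_add, ← add_assoc, ← add_mul, Nat.sub_add_cancel hlt.le]
  · refine ⟨⟨?_, by omega, hx, hb, by omega⟩, by omega⟩
    rw [add_mul, add_assoc, ← mul_add, Nat.add_sub_cancel' hlt.le]
  · omega
  · omega
  · trivial

lemma sum_bilinearSolutions_snd_eq (f : (ℕ × ℕ) × (ℕ × ℕ) → M) (n : ℕ) :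
    ∑ s ∈ bilinearSolutions n with s.1.2 = s.2.2, f s =
      ∑ p ∈ n.divisorsAntidiagonal, ∑ a ∈ Ico 1 p.1, f ((a, p.2), (p.1 - a, p.2)) := by
  rw [sum_sigma']
  refine sum_nbij' (fun s ↦ ⟨(s.1.1 + s.2.1, s.1.2), s.1.1⟩)
    (fun t ↦ ((t.2, t.1.2), (t.1.1 - t.2, t.1.2))) ?_ ?_ ?_ ?_ ?_
  · rintro ⟨⟨a, x⟩, b, y⟩
    simp only [mem_filter, mem_bilinearSolutions, mem_sigma, Nat.mem_divisorsAntidiagonal, mem_Ico]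
    rintro ⟨⟨rfl, ha, hx, hb, hy⟩, rfl⟩
    exact ⟨⟨by ring, by positivity⟩, by omega, by omega⟩
  · rintro ⟨⟨d, x⟩, a⟩
    simp only [mem_filter, mem_bilinearSolutions, mem_sigma, Nat.mem_divisorsAntidiagonal, mem_Ico]
    rintro ⟨⟨rfl, hn⟩, ha, had⟩
    have hx : 0 < x := Nat.pos_of_mul_pos_left (Nat.pos_of_ne_zero hn)
    refine ⟨⟨?_, by omega, hx, by omega, hx⟩, trivial⟩
    rw [← add_mul, Nat.add_sub_cancel' had.le]
  · rintro ⟨⟨a, x⟩, b, y⟩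
    simp +contextual
  · rintro ⟨⟨d, x⟩, a⟩
    simp only [mem_sigma, mem_Ico, Sigma.mk.injEq, Prod.mk.injEq, heq_eq_eq, and_true]
    omega
  · rintro ⟨⟨a, x⟩, b, y⟩
    simp +contextual

lemma sum_bilinearSolutions_fst_eq (k : ℕ → M) (n : ℕ) :
    ∑ s ∈ bilinearSolutions n with s.1.1 = s.2.1, k s.1.1 =
      ∑ d ∈ n.divisors, (n / d - 1) • k d := by
  rw [sum_bilinearSolutions_transpose]
  simp only [Prod.fst_swap]
  rw [sum_bilinearSolutions_snd_eq fun s ↦ k s.1.2]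
  simp only [sum_const, Nat.card_Ico]
  exact Nat.sum_divisorsAntidiagonal' fun x d ↦ (x - 1) • k d

end AddCommMonoid

section AddCommGroup

variable {M : Type*} [AddCommGroup M] {g h : ℕ → ℕ → M}

lemma sum_bilinearSolutions_fst_lt_of_coboundary
    (hgh : ∀ a b, h (a + b) b - h a b = g (a + b) b) (n : ℕ) :
    ∑ s ∈ bilinearSolutions n with s.2.1 < s.1.1, g s.1.1 s.2.1 =
      ∑ s ∈ bilinearSolutions n with s.2.1 < s.1.1, h s.1.1 s.2.1 -
        ∑ s ∈ bilinearSolutions n with s.1.2 < s.2.2, h s.1.1 s.2.1 := by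
  rw [← sum_bilinearSolutions_fst_sub, ← sum_sub_distrib]
  refine sum_congr rfl fun s hs ↦ ?_
  have := hgh (s.1.1 - s.2.1) s.2.1
  rwa [Nat.sub_add_cancel (mem_filter.mp hs).2.le, eq_comm] at this

lemma sum_bilinearSolutions_fst_eq_of_coboundary
    (hgh : ∀ a b, h (a + b) b - h a b = g (a + b) b) (n : ℕ) :
    ∑ s ∈ bilinearSolutions n with s.1.1 = s.2.1, g s.1.1 s.2.1 =
      ∑ s ∈ bilinearSolutions n with s.1.1 = s.2.1, h s.1.1 s.2.1 -
        ∑ s ∈ bilinearSolutions n with s.1.1 = s.2.1, h 0 s.1.1 := by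
  rw [← sum_sub_distrib]
  refine sum_congr rfl fun s hs ↦ ?_
  simpa only [zero_add, ← (mem_filter.mp hs).2] using (hgh 0 s.1.1).symm

theorem sum_bilinearSolutions_of_coboundary
    (hg : ∀ a b, g b a = g a b) (hh : ∀ a b, h b a = h a b)
    (hgh : ∀ a b, h (a + b) b - h a b = g (a + b) b) (n : ℕ) :
    ∑ s ∈ bilinearSolutions n, g s.1.1 s.2.1 =
      ∑ d ∈ n.divisors, (∑ a ∈ range d, h a (d - a) - (n / d) • h 0 d) := by
  have sum_g := sum_bilinearSolutions_eq_two_nsmul_add Prod.fst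
    (f := fun s ↦ g s.1.1 s.2.1) (fun _ ↦ hg _ _) n
  have sum_h := sum_bilinearSolutions_eq_two_nsmul_add Prod.fst
    (f := fun s ↦ h s.1.1 s.2.1) (fun _ ↦ hh _ _) n
  rw [sum_bilinearSolutions_eq_two_nsmul_add Prod.snd (fun _ ↦ hh _ _),
    ← sum_bilinearSolutions_lt_comm Prod.snd (fun _ ↦ hh _ _)] at sum_h
  calc ∑ s ∈ bilinearSolutions n, g s.1.1 s.2.1
      = ∑ s ∈ bilinearSolutions n with s.1.2 = s.2.2, h s.1.1 s.2.1 -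
          ∑ s ∈ bilinearSolutions n with s.1.1 = s.2.1, h 0 s.1.1 := by
        rw [sum_g, sum_bilinearSolutions_fst_lt_of_coboundary hgh,
          sum_bilinearSolutions_fst_eq_of_coboundary hgh, nsmul_sub, eq_sub_of_add_eq' sum_h]
        abel
    _ = ∑ d ∈ n.divisors, (∑ a ∈ Ico 1 d, h a (d - a) - (n / d - 1) • h 0 d) := by
        rw [sum_bilinearSolutions_snd_eq fun s ↦ h s.1.1 s.2.1, sum_bilinearSolutions_fst_eq,
          Nat.sum_divisorsAntidiagonal fun d _ ↦ ∑ a ∈ Ico 1 d, h a (d - a), sum_sub_distrib]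
    _ = ∑ d ∈ n.divisors, (∑ a ∈ range d, h a (d - a) - (n / d) • h 0 d) := by
        refine sum_congr rfl fun d hd ↦ ?_
        have hnd : 0 < n / d := Nat.div_pos (Nat.divisor_le hd) (Nat.pos_of_mem_divisors hd)
        rw [range_eq_Ico, sum_eq_sum_Ico_succ_bot (Nat.pos_of_mem_divisors hd), Nat.sub_zero,
          ← Nat.sub_add_cancel hnd, succ_nsmul, Nat.add_sub_cancel]
        abel

end AddCommGroup

end BilinearSolutions

section Convolution

open Finset

lemma sum_range_six_mul_sq_sub_mul_add_sq {R : Type*} [CommRing R] (D : R) (m : ℕ) :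
    ∑ a ∈ range m, 6 * ((a : R) ^ 2 - a * D + D ^ 2) =
      6 * m * D ^ 2 - 3 * m * (m - 1) * D + m * (m - 1) * (2 * m - 1) := by
  induction m with
  | zero => simp
  | succ m ih => rw [sum_range_succ, ih]; push_cast; ring

theorem twelve_mul_sum_antidiagonal_sum_divisors {R : Type*} [CommRing R] (n : ℕ) :
    12 * ∑ p ∈ antidiagonal n, (∑ d ∈ p.1.divisors, (d : R)) * (∑ d ∈ p.2.divisors, (d : R)) =
      5 * ∑ d ∈ n.divisors, (d : R) ^ 3 - (6 * n - 1) * ∑ d ∈ n.divisors, (d : R) := by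
  rw [sum_antidiagonal_sum_divisors_mul, mul_sum, sum_bilinearSolutions_of_coboundary
    (g := fun a b ↦ 12 * ((a : R) * b)) (h := fun a b ↦ 6 * ((a : R) ^ 2 + a * b + b ^ 2))
    (fun a b ↦ by ring) (fun a b ↦ by ring) (fun a b ↦ by push_cast; ring),
    mul_sum, mul_sum, ← sum_sub_distrib]
  refine sum_congr rfl fun d hd ↦ ?_
  have hn : ((n / d : ℕ) : R) * d = n := by
    exact_mod_cast congrArg Nat.cast (Nat.div_mul_cancel (Nat.dvd_of_mem_divisors hd))
  have hsum : ∑ a ∈ range d, 6 * ((a : R) ^ 2 + a * (d - a : ℕ) + (d - a : ℕ) ^ 2) =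
      5 * (d : R) ^ 3 + d := by
    calc _ = ∑ a ∈ range d, 6 * ((a : R) ^ 2 - a * d + d ^ 2) := sum_congr rfl fun a ha ↦ by
          rw [Nat.cast_sub (mem_range.mp ha).le]; ring
      _ = _ := by rw [sum_range_six_mul_sq_sub_mul_add_sq]; ring
  rw [hsum, nsmul_eq_mul, ← hn]
  push_cast
  ring

end Convolution

section LevelFive

open Finset

/-- The weight `2 + 1_{r = k} + 1_{r = -k}` on residues modulo `5`: the summands
`d * charWeight k d` are the Lambert coefficients of `L + Ẽ₂`, where `L` is the logarithmic
derivative of the character. -/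
def charWeight (k r : ZMod 5) : ℤ :=
  2 + (if r = k then 1 else 0) + if r = -k then 1 else 0

/-- A function of two residues which resolves `charWeight k r * charWeight k s` into a second
difference, see `mixedWeight_parallelogram`; it enters only through `charKernel`. -/
def mixedWeight (k r s : ZMod 5) : ℤ :=
  if r = 0 then 5 * charWeight k s else 6 * charWeight k r

lemma charWeight_neg (k r : ZMod 5) : charWeight k (-r) = charWeight k r := by
  simp only [charWeight, neg_eq_iff_eq_neg, neg_neg]
  ring

lemma mixedWeight_add_right (k r s : ZMod 5) : mixedWeight k r (s + r) = mixedWeight k r s := by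
  unfold mixedWeight
  split_ifs with h <;> simp [h]

lemma mixedWeight_add_comm (k r s : ZMod 5) :
    mixedWeight k (r + s) r = mixedWeight k (r + s) s := by
  unfold mixedWeight
  split_ifs with h
  · rw [eq_neg_of_add_eq_zero_left h, charWeight_neg]
  · rfl

lemma mixedWeight_parallelogram {k : ZMod 5} (hk : k ≠ 0) (r s : ZMod 5) :
    2 * mixedWeight k r s + 2 * mixedWeight k s r - mixedWeight k (r + s) r -
      mixedWeight k (r - s) s = 5 * charWeight k r * charWeight k s := by
  revert k r s
  decide

/-- The symmetric kernel whose Liouville coboundary is five times the product of the weighted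
divisors `a * charWeight k a` and `b * charWeight k b`; it is a weighted analogue of the classical
kernel `a ^ 2 + a * b + b ^ 2`. -/
def charKernel (k : ZMod 5) (a b : ℕ) : ℤ :=
  (a + b) * (a * mixedWeight k b a + b * mixedWeight k a b) - a * b * mixedWeight k (a + b) a

lemma charKernel_comm (k : ZMod 5) (a b : ℕ) : charKernel k b a = charKernel k a b := by
  rw [charKernel, charKernel, mixedWeight_add_comm, add_comm (b : ZMod 5)]
  ring

lemma charKernel_coboundary {k : ZMod 5} (hk : k ≠ 0) (a b : ℕ) :
    charKernel k (a + b) b - charKernel k a b =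
      5 * (((a + b : ℕ) * charWeight k (a + b : ℕ)) * (b * charWeight k b)) := by
  have h := mixedWeight_parallelogram hk (a + b) b
  rw [add_sub_cancel_right, mixedWeight_add_right] at h
  simp only [charKernel, Nat.cast_add, mixedWeight_add_right, mixedWeight_add_comm k a b]
  linear_combination (a + b : ℤ) * b * h

lemma charKernel_zero_left (k : ZMod 5) (d : ℕ) :
    charKernel k 0 d = 5 * d ^ 2 * charWeight k d := by
  simp only [charKernel, mixedWeight, Nat.cast_zero, if_pos, zero_mul, zero_add, sub_zero]
  ring

instance fact_prime_five : Fact (Nat.Prime 5) := ⟨by norm_num⟩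

lemma forall_of_lt_of_add {N : ℕ} (hN : 0 < N) {P : ℕ → Prop} (base : ∀ d < N, P d)
    (step : ∀ d, P d → P (d + N)) (d : ℕ) : P d := by
  induction d using Nat.strong_induction_on with
  | _ d ih =>
    rcases lt_or_ge d N with hd | hd
    · exact base d hd
    · rw [← Nat.sub_add_cancel hd]
      exact step _ (ih _ (by omega))

section Periodic

variable {N : ℕ} (f : ZMod N → ℤ) (d : ℕ)

lemma sum_range_add_sub_mul :
    ∑ a ∈ range (d + N), ((d + N : ℕ) - a : ℤ) * f a =
      (d + N) * ∑ i ∈ range N, f i - ∑ i ∈ range N, i * f i +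
        ∑ a ∈ range d, (d - a : ℤ) * f a := by
  rw [add_comm d, sum_range_add, mul_sum, ← sum_sub_distrib]
  congr 1 <;> refine sum_congr rfl fun a _ ↦ ?_
  · push_cast; ring
  · simp only [Nat.cast_add, CharP.cast_eq_zero, zero_add]; ring

lemma sum_range_add_mul_sub_mul :
    ∑ a ∈ range (d + N), (a * ((d + N : ℕ) - a) : ℤ) * f a =
      (d + N) * ∑ i ∈ range N, i * f i - ∑ i ∈ range N, i ^ 2 * f i +
        ∑ a ∈ range d, (a * (d - a) : ℤ) * f a + N * ∑ a ∈ range d, (d - a : ℤ) * f a := by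
  rw [add_comm d, sum_range_add, add_assoc, mul_sum, mul_sum, ← sum_sub_distrib,
    ← sum_add_distrib]
  congr 1 <;> refine sum_congr rfl fun a _ ↦ ?_
  · push_cast; ring
  · simp only [Nat.cast_add, CharP.cast_eq_zero, zero_add]; ring

end Periodic

lemma sum_charWeight {k : ZMod 5} (hk : k ≠ 0) : ∑ i ∈ range 5, charWeight k i = 12 := by
  revert k
  decide

lemma sum_mul_charWeight {k : ZMod 5} (hk : k ≠ 0) : ∑ i ∈ range 5, i * charWeight k i = 25 := by
  revert k
  decide

lemma sum_sq_mul_charWeight {k : ZMod 5} (hk : k ≠ 0) :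
    ∑ i ∈ range 5, i ^ 2 * charWeight k i = 75 + 2 * quadraticChar (ZMod 5) k := by
  revert k
  decide

lemma sum_mixedWeight {k : ZMod 5} (hk : k ≠ 0) (r : ZMod 5) :
    ∑ i ∈ range 5, mixedWeight k i r = 5 * charWeight k r + 60 := by
  revert k r
  decide

lemma sum_mul_mixedWeight {k : ZMod 5} (hk : k ≠ 0) (r : ZMod 5) :
    ∑ i ∈ range 5, i * mixedWeight k i r = 150 := by
  revert k r
  decide

lemma two_mul_sum_range_sub_mul_mixedWeight {k : ZMod 5} (hk : k ≠ 0) (d : ℕ) :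
    2 * ∑ a ∈ range d, (d - a : ℤ) * mixedWeight k a d =
      (charWeight k d + 12) * d ^ 2 + 5 * charWeight k d * d -
        if (d : ZMod 5) = 0 then 0 else (1 - quadraticChar (ZMod 5) k) * charWeight k d := by
  induction d using forall_of_lt_of_add (N := 5) (by norm_num) with
  | base d hd =>
    revert k d
    decide
  | step d ih =>
    have hd : ((d + 5 : ℕ) : ZMod 5) = d := by
      rw [Nat.cast_add, ZMod.natCast_self, add_zero]
    rw [hd, sum_range_add_sub_mul fun a ↦ mixedWeight k a d, sum_mixedWeight hk,
      sum_mul_mixedWeight hk]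
    push_cast
    linear_combination ih

lemma five_mul_sum_range_sub_mul_charWeight {k : ZMod 5} (hk : k ≠ 0) {d : ℕ}
    (hd : (d : ZMod 5) = 0) :
    5 * ∑ a ∈ range d, (d - a : ℤ) * charWeight k a = 6 * d ^ 2 + 5 * d := by
  induction d using forall_of_lt_of_add (N := 5) (by norm_num) with
  | base d hlt =>
    revert k d
    decide
  | step d ih =>
    rw [Nat.cast_add, ZMod.natCast_self, add_zero] at hd
    rw [sum_range_add_sub_mul, sum_charWeight hk, sum_mul_charWeight hk]
    push_cast
    linear_combination ih hd

lemma five_mul_sum_range_mul_sub_mul_charWeight {k : ZMod 5} (hk : k ≠ 0) {d : ℕ}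
    (hd : (d : ZMod 5) = 0) :
    5 * ∑ a ∈ range d, (a * (d - a) : ℤ) * charWeight k a =
      2 * d ^ 3 - 2 * quadraticChar (ZMod 5) k * d := by
  induction d using forall_of_lt_of_add (N := 5) (by norm_num) with
  | base d hlt =>
    revert k d
    decide
  | step d ih =>
    rw [Nat.cast_add, ZMod.natCast_self, add_zero] at hd
    rw [sum_range_add_mul_sub_mul, sum_mul_charWeight hk, sum_sq_mul_charWeight hk]
    push_cast
    linear_combination ih hd + 5 * five_mul_sum_range_sub_mul_charWeight hk hd

lemma sum_range_mul_sub_mul_mixedWeight {k : ZMod 5} (hk : k ≠ 0) (d : ℕ) :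
    ∑ a ∈ range d, (a * (d - a) : ℤ) * mixedWeight k d a =
      if (d : ZMod 5) = 0 then 2 * d ^ 3 - 2 * quadraticChar (ZMod 5) k * d
      else charWeight k d * (d ^ 3 - d) := by
  split_ifs with hd
  · rw [← five_mul_sum_range_mul_sub_mul_charWeight hk hd, mul_sum]
    refine sum_congr rfl fun a _ ↦ ?_
    rw [mixedWeight, if_pos hd]
    ring
  · have cubic (D : ℤ) (m : ℕ) : 6 * ∑ a ∈ range m, (a * (D - a) : ℤ) =
        3 * D * m * (m - 1) - m * (m - 1) * (2 * m - 1) := by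
      induction m with
      | zero => simp
      | succ m ih => rw [sum_range_succ, mul_add, ih]; push_cast; ring
    simp only [mixedWeight, if_neg hd]
    rw [← sum_mul]
    linear_combination charWeight k d * cubic d d

lemma sum_range_charKernel {k : ZMod 5} (hk : k ≠ 0) (d : ℕ) :
    ∑ a ∈ range d, charKernel k a (d - a) =
      12 * d ^ 3 + quadraticChar (ZMod 5) k * (d * charWeight k d) := by
  have expand : ∀ a ∈ range d, charKernel k a (d - a) =
      d * (a * mixedWeight k (d - a : ℕ) d) + d * ((d - a) * mixedWeight k a d) -
        a * (d - a) * mixedWeight k d a := by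
    intro a ha
    obtain ⟨b, rfl⟩ := Nat.exists_eq_add_of_le (mem_range.mp ha).le
    have h := mixedWeight_add_right k a b
    rw [add_comm] at h
    simp only [charKernel, Nat.add_sub_cancel_left, Nat.cast_add, mixedWeight_add_right, h]
    ring
  have reflect : ∑ a ∈ range d, (a * mixedWeight k (d - a : ℕ) d : ℤ) =
      ∑ a ∈ range d, (d - a : ℤ) * mixedWeight k a d - d * (5 * charWeight k d) := by
    have flip := sum_flip (n := d) fun a ↦ (d - a : ℤ) * mixedWeight k a d
    rw [sum_range_succ, sum_range_succ, Nat.sub_self, Nat.cast_zero, Nat.cast_zero, sub_zero,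
      sub_self, zero_mul, add_zero, mixedWeight, if_pos rfl] at flip
    rw [← flip, add_sub_cancel_right]
    refine sum_congr rfl fun a ha ↦ ?_
    rw [Nat.cast_sub (R := ℤ) (mem_range.mp ha).le, sub_sub_cancel]
  rw [sum_congr rfl expand, sum_sub_distrib, sum_add_distrib, ← mul_sum, ← mul_sum, reflect,
    sum_range_mul_sub_mul_mixedWeight hk]
  have key := two_mul_sum_range_sub_mul_mixedWeight hk d
  split_ifs at key ⊢ with hd
  · have hw : charWeight k d = 2 := by simp [hd, charWeight, hk, hk.symm]
    rw [hw] at key ⊢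
    linear_combination d * key
  · linear_combination d * key

theorem five_mul_sum_antidiagonal_charWeight {k : ZMod 5} (hk : k ≠ 0) (n : ℕ) :
    5 * ∑ p ∈ antidiagonal n, (∑ d ∈ p.1.divisors, d * charWeight k d) *
        (∑ d ∈ p.2.divisors, d * charWeight k d) =
      12 * ∑ d ∈ n.divisors, (d : ℤ) ^ 3 -
        (5 * n - quadraticChar (ZMod 5) k) * ∑ d ∈ n.divisors, d * charWeight k d := by
  rw [sum_antidiagonal_sum_divisors_mul (fun d ↦ d * charWeight k d) (fun d ↦ d * charWeight k d),
    mul_sum, sum_bilinearSolutions_of_coboundary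
    (g := fun a b ↦ 5 * ((a * charWeight k a) * (b * charWeight k b)))
    (fun a b ↦ by ring) (charKernel_comm k) (charKernel_coboundary hk),
    mul_sum, mul_sum, ← sum_sub_distrib]
  refine sum_congr rfl fun d hd ↦ ?_
  have hn : ((n / d : ℕ) : ℤ) * d = n := by
    exact_mod_cast Nat.div_mul_cancel (Nat.dvd_of_mem_divisors hd)
  rw [sum_range_charKernel hk, charKernel_zero_left, nsmul_eq_mul, ← hn]
  ring

end LevelFive

section PowerSeries

open Finset.HasAntidiagonal (antidiagonal mem_antidiagonal)

variable {𝕜 : Type*} [RCLike 𝕜]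

/-- Polynomial growth of a sequence of coefficients; it makes `∑ aₙ qⁿ` and all its derivatives
converge on the open unit disc. -/
def PolyBounded (a : ℕ → 𝕜) : Prop :=
  ∃ (C : ℝ) (k : ℕ), ∀ n, ‖a n‖ ≤ C * (n : ℝ) ^ k

namespace PolyBounded

variable {a b : ℕ → 𝕜} {q : 𝕜}

lemma natCast_pow (k : ℕ) : PolyBounded fun n ↦ (n : 𝕜) ^ k :=
  ⟨1, k, fun n ↦ by simp⟩

lemma of_norm_le (C : ℝ) (h : ∀ n, ‖a n‖ ≤ C) : PolyBounded a :=
  ⟨C, 0, fun n ↦ by simpa using h n⟩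

lemma mono (hb : PolyBounded b) (h : ∀ n, ‖a n‖ ≤ ‖b n‖) : PolyBounded a :=
  let ⟨C, k, hC⟩ := hb
  ⟨C, k, fun n ↦ (h n).trans (hC n)⟩

lemma natCast_mul (ha : PolyBounded a) : PolyBounded fun n ↦ n * a n := by
  obtain ⟨C, k, h⟩ := ha
  refine ⟨C, k + 1, fun n ↦ ?_⟩
  calc ‖(n : 𝕜) * a n‖ = n * ‖a n‖ := by rw [norm_mul, RCLike.norm_natCast]
    _ ≤ n * (C * (n : ℝ) ^ k) := by gcongr; exact h n
    _ = C * (n : ℝ) ^ (k + 1) := by ring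

lemma div_natCast (ha : PolyBounded a) : PolyBounded fun n ↦ a n / n := by
  refine ha.mono fun n ↦ ?_
  rcases n.eq_zero_or_pos with rfl | hn
  · simp
  · rw [norm_div, RCLike.norm_natCast]
    exact div_le_self (norm_nonneg _) (by exact_mod_cast hn)

lemma sum_divisors (ha : PolyBounded a) : PolyBounded fun n ↦ ∑ d ∈ n.divisors, a d := by
  obtain ⟨C, k, h⟩ := ha
  refine ⟨|C|, k + 1, fun n ↦ ?_⟩
  have hle (d) (hd : d ∈ n.divisors) : ‖a d‖ ≤ |C| * (n : ℝ) ^ k :=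
    calc ‖a d‖ ≤ C * (d : ℝ) ^ k := h d
      _ ≤ |C| * (n : ℝ) ^ k := by
        gcongr
        · exact le_abs_self C
        · exact Nat.divisor_le hd
  calc ‖∑ d ∈ n.divisors, a d‖ ≤ ∑ _ ∈ n.divisors, |C| * (n : ℝ) ^ k := norm_sum_le_of_le _ hle
    _ = (n.divisors.card : ℝ) * (|C| * (n : ℝ) ^ k) := by rw [Finset.sum_const, nsmul_eq_mul]
    _ ≤ n * (|C| * (n : ℝ) ^ k) := by gcongr; exact Nat.card_divisors_le_self n
    _ = |C| * (n : ℝ) ^ (k + 1) := by ring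

lemma summable_norm (ha : PolyBounded a) (hq : ‖q‖ < 1) : Summable fun n ↦ ‖a n * q ^ n‖ := by
  obtain ⟨C, k, h⟩ := ha
  have hs := (summable_pow_mul_geometric_of_norm_lt_one k (r := ‖q‖) (by simpa using hq)).mul_left C
  refine hs.of_nonneg_of_le (fun _ ↦ norm_nonneg _) fun n ↦ ?_
  rw [norm_mul, norm_pow, ← mul_assoc]
  gcongr
  exact h n

lemma summable (ha : PolyBounded a) (hq : ‖q‖ < 1) : Summable fun n ↦ a n * q ^ n :=
  (ha.summable_norm hq).of_norm

lemma tsum_add_const_mul (ha : PolyBounded a) (hb : PolyBounded b) (c : 𝕜) (hq : ‖q‖ < 1) :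
    ∑' n, (a n + c * b n) * q ^ n = ∑' n, a n * q ^ n + c * ∑' n, b n * q ^ n := by
  simp only [add_mul, mul_assoc]
  rw [(ha.summable hq).tsum_add ((hb.summable hq).mul_left c), tsum_mul_left]

lemma tsum_sq_of_sum_antidiagonal (ha : PolyBounded a) (hb : PolyBounded b) {x y z : 𝕜}
    (h : ∀ n, ∑ p ∈ antidiagonal n, a p.1 * a p.2 = x * b n - (y * n - z) * a n)
    (hq : ‖q‖ < 1) :
    (∑' n, a n * q ^ n) ^ 2 =
      x * ∑' n, b n * q ^ n - y * ∑' n, n * a n * q ^ n + z * ∑' n, a n * q ^ n := by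
  have hx := (hb.summable hq).mul_left x
  have hy := (ha.natCast_mul.summable hq).mul_left y
  have hz := (ha.summable hq).mul_left z
  rw [sq, tsum_mul_tsum_eq_tsum_sum_antidiagonal_of_summable_norm (ha.summable_norm hq)
    (ha.summable_norm hq), ← tsum_mul_left, ← tsum_mul_left, ← tsum_mul_left, ← hx.tsum_sub hy,
    ← (hx.sub hy).tsum_add hz]
  refine tsum_congr fun n ↦ ?_
  calc ∑ p ∈ antidiagonal n, a p.1 * q ^ p.1 * (a p.2 * q ^ p.2)
      = (∑ p ∈ antidiagonal n, a p.1 * a p.2) * q ^ n := by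
        rw [Finset.sum_mul]
        refine Finset.sum_congr rfl fun p hp ↦ ?_
        rw [← mem_antidiagonal.mp hp, pow_add]
        ring
    _ = x * (b n * q ^ n) - y * (n * a n * q ^ n) + z * (a n * q ^ n) := by rw [h]; ring

lemma hasDerivAt_tsum (ha : PolyBounded a) (hq : ‖q‖ < 1) :
    HasDerivAt (fun z ↦ ∑' n, a n * z ^ n) (∑' n, a n * (n * q ^ (n - 1))) q := by
  obtain ⟨r, hqr, hr⟩ := exists_between hq
  have hr0 : 0 < r := (norm_nonneg q).trans_lt hqr
  have hu : Summable fun n : ℕ ↦ ‖n * a n * (r : 𝕜) ^ n‖ * r⁻¹ :=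
    (ha.natCast_mul.summable_norm (by simpa [abs_of_pos hr0] using hr)).mul_right _
  refine hasDerivAt_tsum_of_isPreconnected hu Metric.isOpen_ball
    (convex_ball (0 : 𝕜) r).isPreconnected
    (fun n y _ ↦ (hasDerivAt_pow n y).const_mul (a n)) (fun n y hy ↦ ?_)
    (Metric.mem_ball_self hr0) (ha.summable (by simp)) (by simpa using hqr)
  rcases n with _ | n
  · simp
  · have hy : ‖y‖ ≤ r := (mem_ball_zero_iff.mp hy).le
    calc ‖a (n + 1) * ((n + 1 : ℕ) * y ^ n)‖
        = ‖a (n + 1)‖ * (‖((n + 1 : ℕ) : 𝕜)‖ * ‖y‖ ^ n) := by rw [norm_mul, norm_mul, norm_pow]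
      _ ≤ ‖a (n + 1)‖ * (‖((n + 1 : ℕ) : 𝕜)‖ * r ^ n) := by gcongr
      _ = ‖(n + 1 : ℕ) * a (n + 1) * (r : 𝕜) ^ (n + 1)‖ * r⁻¹ := by
        rw [norm_mul, norm_mul, norm_pow, RCLike.norm_of_nonneg hr0.le]
        field_simp
        ring

end PolyBounded

end PowerSeries

section LambertSeries

lemma tsum_sum_divisors_succ {R : Type*} [Semiring R] [TopologicalSpace R] (f : ℕ → R) (q : R) :
    ∑' n, (∑ d ∈ (n + 1).divisors, f d) * q ^ (n + 1) =
      ∑' n, (∑ d ∈ n.divisors, f d) * q ^ n := by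
  refine (add_left_injective 1).tsum_eq (f := fun n ↦ (∑ d ∈ n.divisors, f d) * q ^ n) ?_
  rintro (_ | n) hn
  · simp at hn
  · exact ⟨n, rfl⟩

lemma sum_divisorsAntidiagonal_mul_pow_div {K : Type*} [Field K] [CharZero K] (f : ℕ → K) (q : K)
    (n : ℕ) :
    ∑ x ∈ n.divisorsAntidiagonal, f x.1 * (q ^ (x.1 * x.2) / x.2) =
      (∑ d ∈ n.divisors, d * f d) / n * q ^ n := by
  rw [Nat.sum_divisorsAntidiagonal fun x y ↦ f x * (q ^ (x * y) / y), Finset.sum_div,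
    Finset.sum_mul]
  refine Finset.sum_congr rfl fun d hd ↦ ?_
  obtain ⟨m, rfl⟩ := Nat.dvd_of_mem_divisors hd
  have hd0 : d ≠ 0 := (Nat.pos_of_mem_divisors hd).ne'
  rw [Nat.mul_div_cancel_left m (Nat.pos_of_ne_zero hd0), Nat.cast_mul,
    mul_div_mul_left _ _ (Nat.cast_ne_zero.mpr hd0)]
  ring

variable {f : ℕ → ℂ} {q : ℂ}

lemma PolyBounded.summable_prod_mul_pow_div (hf : PolyBounded f) (hq : ‖q‖ < 1) :
    Summable fun p : ℕ+ × ℕ+ ↦ f p.1 * (q ^ (p.1 * p.2 : ℕ) / p.2) := by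
  obtain ⟨C, k, hC⟩ := hf
  have hs := ((Equiv.prodComm ℕ+ ℕ+).summable_iff.mpr
    (summable_prod_mul_pow k (r := ‖q‖) (by simpa using hq))).mul_left C
  refine .of_norm_bounded hs fun p ↦ ?_
  have hp : (1 : ℝ) ≤ (p.2 : ℕ) := by exact_mod_cast p.2.pos
  calc ‖f p.1 * (q ^ (p.1 * p.2 : ℕ) / p.2)‖
      = ‖f p.1‖ * (‖q‖ ^ (p.1 * p.2 : ℕ) / (p.2 : ℕ)) := by
        rw [norm_mul, norm_div, norm_pow, norm_natCast]
    _ ≤ C * (p.1 : ℕ) ^ k * ‖q‖ ^ (p.1 * p.2 : ℕ) := by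
        refine mul_le_mul (hC _) (div_le_self (by positivity) hp) (by positivity) ?_
        exact (norm_nonneg _).trans (hC _)
    _ = C * (((p.1 : ℕ) : ℝ) ^ k * ‖q‖ ^ (p.2 * p.1 : ℕ)) := by rw [mul_comm (p.2 : ℕ), mul_assoc]

lemma hasSum_pnat_mul_pow_div {z : ℂ} (hz : ‖z‖ < 1) (c : ℂ) :
    HasSum (fun k : ℕ+ ↦ c * (z ^ (k : ℕ) / k)) (c * -log (1 - z)) := by
  have h := (hasSum_taylorSeries_neg_log hz).mul_left c
  exact (hasSum_pnat_iff (f := fun k ↦ c * (z ^ k / k))).mpr (by simpa using h)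

lemma PolyBounded.hasSum_mul_neg_log_one_sub_pow (hf : PolyBounded f) (hq : ‖q‖ < 1) :
    HasSum (fun m : ℕ ↦ f m * -log (1 - q ^ m))
      (∑' n : ℕ, (∑ d ∈ n.divisors, d * f d) / n * q ^ n) := by
  have hF := (hf.summable_prod_mul_pow_div hq).hasSum
  have hrow (m : ℕ+) : HasSum (fun k : ℕ+ ↦ f m * (q ^ (m * k : ℕ) / k))
      (f m * -log (1 - q ^ (m : ℕ))) := by
    simp only [pow_mul]
    refine hasSum_pnat_mul_pow_div ?_ _
    rw [norm_pow]
    exact pow_lt_one₀ (norm_nonneg _) hq m.ne_zero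
  have hfiber (n : ℕ+) : HasSum (fun x : (n : ℕ).divisorsAntidiagonal ↦
      f x.1.1 * (q ^ (x.1.1 * x.1.2) / x.1.2))
      ((∑ d ∈ (n : ℕ).divisors, d * f d) / n * q ^ (n : ℕ)) := by
    rw [← sum_divisorsAntidiagonal_mul_pow_div]
    exact Finset.hasSum _ fun x : ℕ × ℕ ↦ f x.1 * (q ^ (x.1 * x.2) / x.2)
  have hrows := hasSum_pnat_iff (f := fun m ↦ f m * -log (1 - q ^ m)).mp
    (hF.prod_fiberwise hrow)
  have hfibers := hasSum_pnat_iff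
    (f := fun n : ℕ ↦ (∑ d ∈ n.divisors, d * f d) / n * q ^ n).mp
    ((sigmaAntidiagonalEquivProd.hasSum_iff.mpr hF).sigma hfiber)
  simp only [pow_zero, sub_self, log_zero, neg_zero, mul_zero, add_zero, Nat.divisors_zero,
    Finset.sum_empty, zero_div, zero_mul] at hrows hfibers
  rwa [hfibers.tsum_eq]

lemma hasProd_one_sub_pow_inv (hq : ‖q‖ < 1) {m r : ℕ} (hr : r ≠ 0) (hrm : r < m) :
    HasProd (fun n : ℕ ↦ (1 - q ^ (m * n + r))⁻¹)
      (cexp (∑' n : ℕ, (∑ d ∈ n.divisors, d * if (d : ZMod m) = r then (1 : ℂ) else 0) / n *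
        q ^ n)) := by
  have hlog := PolyBounded.hasSum_mul_neg_log_one_sub_pow (PolyBounded.of_norm_le
    (a := fun d ↦ if (d : ZMod m) = r then (1 : ℂ) else 0) 1 fun n ↦ by split_ifs <;> simp) hq
  have hinj : Function.Injective fun n : ℕ ↦ m * n + r := fun a b hab ↦
    Nat.eq_of_mul_eq_mul_left (by omega) (Nat.add_right_cancel hab)
  rw [← hinj.hasSum_iff] at hlog
  · convert hlog.cexp using 2 with n
    have hlt : ‖q ^ (m * n + r)‖ < 1 := by
      rw [norm_pow]
      exact pow_lt_one₀ (norm_nonneg _) hq (by omega)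
    have hne : 1 - q ^ (m * n + r) ≠ 0 := sub_ne_zero.mpr fun h ↦ by simp [← h] at hlt
    simp [Complex.exp_neg, Complex.exp_log hne]
  · intro d hd
    have hne : (d : ZMod m) ≠ r := fun h ↦ hd ⟨d / m, by
      rw [ZMod.natCast_eq_natCast_iff', Nat.mod_eq_of_lt hrm] at h
      simpa only [h] using Nat.div_add_mod d m⟩
    rw [if_neg hne, zero_mul]

end LambertSeries

section EulerOperator

open UpperHalfPlane (upperHalfPlaneSet isOpen_upperHalfPlaneSet)

/-- The Euler operator `q d/dq` in the coordinate `τ`, where `q = exp (2πiτ)`. -/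
noncomputable def qDeriv (f : ℂ → ℂ) (τ : ℂ) : ℂ := (2 * π * I)⁻¹ * deriv f τ

lemma qDeriv_of_hasDerivAt {f : ℂ → ℂ} {c τ : ℂ} (h : HasDerivAt f (2 * π * I * c) τ) :
    qDeriv f τ = c := by
  rw [qDeriv, h.deriv, inv_mul_cancel_left₀ two_pi_I_ne_zero]

lemma eqOn_qDeriv {f g : ℂ → ℂ} (h : upperHalfPlaneSet.EqOn f g) :
    upperHalfPlaneSet.EqOn (qDeriv f) (qDeriv g) := fun τ hτ ↦ by
  rw [qDeriv, qDeriv,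
    (h.eventuallyEq_of_mem (isOpen_upperHalfPlaneSet.mem_nhds hτ)).deriv_eq]

/-- The function `q ^ κ * exp (∑ aₙ qⁿ / n)` of `τ`, where `q = exp (2πiτ)`; its logarithmic
derivative is `κ + ∑ aₙ qⁿ`. -/
noncomputable def qPowExp (κ : ℂ) (a : ℕ → ℂ) (τ : ℂ) : ℂ :=
  cexp (2 * π * I * τ * κ + ∑' n, a n / n * cexp (2 * π * I * τ) ^ n)

variable {a : ℕ → ℂ} {τ : ℂ}

lemma PolyBounded.hasDerivAt_tsum_cexp (ha : PolyBounded a) (hτ : 0 < τ.im) :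
    HasDerivAt (fun τ ↦ ∑' n, a n * cexp (2 * π * I * τ) ^ n)
      (2 * π * I * ∑' n, n * a n * cexp (2 * π * I * τ) ^ n) τ := by
  have hexp : HasDerivAt (fun τ ↦ cexp (2 * π * I * τ))
      (cexp (2 * π * I * τ) * (2 * π * I)) τ := by
    simpa using ((hasDerivAt_id τ).const_mul (2 * π * I : ℂ)).cexp
  have hq : ‖cexp (2 * π * I * τ)‖ < 1 := UpperHalfPlane.norm_exp_two_pi_I_lt_one ⟨τ, hτ⟩
  refine ((ha.hasDerivAt_tsum hq).comp τ hexp).congr_deriv ?_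
  rw [← tsum_mul_left, ← tsum_mul_right]
  refine tsum_congr fun n ↦ ?_
  rcases n with _ | n
  · simp
  · rw [Nat.add_sub_cancel]
    ring

lemma PolyBounded.hasDerivAt_qPowExp (ha : PolyBounded a) (ha₀ : a 0 = 0) (κ : ℂ)
    (hτ : 0 < τ.im) :
    HasDerivAt (qPowExp κ a)
      (2 * π * I * ((κ + ∑' n, a n * cexp (2 * π * I * τ) ^ n) * qPowExp κ a τ)) τ := by
  have hlin : HasDerivAt (fun τ ↦ 2 * π * I * τ * κ) (2 * π * I * κ) τ := by
    simpa using ((hasDerivAt_id τ).const_mul (2 * π * I : ℂ)).mul_const κ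
  have hcancel (n : ℕ) : n * (a n / n) = a n :=
    mul_div_cancel_of_imp' fun hn ↦ by rw [Nat.cast_eq_zero.mp hn, ha₀]
  refine (hlin.add (ha.div_natCast.hasDerivAt_tsum_cexp hτ)).cexp.congr_deriv ?_
  simp only [hcancel, qPowExp, Pi.add_apply]
  ring

lemma PolyBounded.qDeriv_qPowExp (ha : PolyBounded a) (ha₀ : a 0 = 0) (κ : ℂ) (hτ : 0 < τ.im) :
    qDeriv (qPowExp κ a) τ = (κ + ∑' n, a n * cexp (2 * π * I * τ) ^ n) * qPowExp κ a τ :=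
  qDeriv_of_hasDerivAt (ha.hasDerivAt_qPowExp ha₀ κ hτ)

lemma PolyBounded.qDeriv_qDeriv_qPowExp (ha : PolyBounded a) (ha₀ : a 0 = 0) (κ : ℂ)
    (hτ : 0 < τ.im) :
    qDeriv (qDeriv (qPowExp κ a)) τ = (∑' n, n * a n * cexp (2 * π * I * τ) ^ n +
      (κ + ∑' n, a n * cexp (2 * π * I * τ) ^ n) ^ 2) * qPowExp κ a τ := by
  rw [eqOn_qDeriv (fun _ ↦ ha.qDeriv_qPowExp ha₀ κ) hτ]
  refine qDeriv_of_hasDerivAt ((((ha.hasDerivAt_tsum_cexp hτ).const_add κ).mul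
    (ha.hasDerivAt_qPowExp ha₀ κ hτ)).congr_deriv ?_)
  ring

end EulerOperator

section RogersRamanujan

variable {q : ℂ}

lemma polyBounded_sum_divisors_pow (k : ℕ) :
    PolyBounded fun n ↦ ∑ d ∈ n.divisors, (d : ℂ) ^ k :=
  (PolyBounded.natCast_pow k).sum_divisors

lemma tsum_sum_divisors_sq (hq : ‖q‖ < 1) :
    (∑' n : ℕ, (∑ d ∈ n.divisors, (d : ℂ)) * q ^ n) ^ 2 =
      5 / 12 * ∑' n : ℕ, (∑ d ∈ n.divisors, (d : ℂ) ^ 3) * q ^ n -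
        1 / 2 * ∑' n : ℕ, n * (∑ d ∈ n.divisors, (d : ℂ)) * q ^ n +
        1 / 12 * ∑' n : ℕ, (∑ d ∈ n.divisors, (d : ℂ)) * q ^ n := by
  refine PolyBounded.tsum_sq_of_sum_antidiagonal (by simpa using polyBounded_sum_divisors_pow 1)
    (polyBounded_sum_divisors_pow 3) (fun n ↦ ?_) hq
  linear_combination twelve_mul_sum_antidiagonal_sum_divisors (R := ℂ) n / 12

lemma polyBounded_sum_divisors_charWeight_sub (k : ZMod 5) (c : ℂ) :
    PolyBounded fun n ↦ ∑ d ∈ n.divisors, d * (charWeight k d - c) := by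
  refine (PolyBounded.of_norm_le (4 + ‖c‖) fun n ↦ ?_).natCast_mul.sum_divisors
  refine (norm_sub_le _ _).trans (add_le_add_left ?_ _)
  rw [charWeight]
  split_ifs <;> norm_num

lemma tsum_sum_divisors_charWeight_sq {k : ZMod 5} (hk : k ≠ 0) (hq : ‖q‖ < 1) :
    (∑' n : ℕ, (∑ d ∈ n.divisors, (d * charWeight k d : ℂ)) * q ^ n) ^ 2 =
      12 / 5 * ∑' n : ℕ, (∑ d ∈ n.divisors, (d : ℂ) ^ 3) * q ^ n -
        ∑' n : ℕ, n * (∑ d ∈ n.divisors, (d * charWeight k d : ℂ)) * q ^ n +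
        quadraticChar (ZMod 5) k / 5 *
          ∑' n : ℕ, (∑ d ∈ n.divisors, (d * charWeight k d : ℂ)) * q ^ n := by
  rw [← one_mul (∑' n : ℕ, n * _ * q ^ n)]
  refine PolyBounded.tsum_sq_of_sum_antidiagonal
    (by simpa using polyBounded_sum_divisors_charWeight_sub k 0)
    (polyBounded_sum_divisors_pow 3) (fun n ↦ ?_) hq
  have h := congrArg (Int.cast (R := ℂ)) (five_mul_sum_antidiagonal_charWeight hk n)
  push_cast at h
  linear_combination h / 5

/-- The linear term of `tsum_sum_divisors_charWeight_sq` cancels only for this `κ`, which is `11/60`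
for `k = ±2` and `-1/60` for `k = ±1`. -/
theorem riccati_charWeight {k : ZMod 5} (hk : k ≠ 0) (hq : ‖q‖ < 1) {κ : ℂ}
    (hκ : κ = 1 / 12 - quadraticChar (ZMod 5) k / 10) :
    ∑' n : ℕ, n * (∑ d ∈ n.divisors, d * (charWeight k d - 2 : ℂ)) * q ^ n +
      (κ + ∑' n : ℕ, (∑ d ∈ n.divisors, d * (charWeight k d - 2 : ℂ)) * q ^ n) ^ 2 +
      2 * (-(1 / 12) + 2 * ∑' n : ℕ, (∑ d ∈ n.divisors, (d : ℂ)) * q ^ n) *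
        (κ + ∑' n : ℕ, (∑ d ∈ n.divisors, d * (charWeight k d - 2 : ℂ)) * q ^ n) -
      11 / 5 * (1 / 720 + 1 / 3 * ∑' n : ℕ, (∑ d ∈ n.divisors, (d : ℂ) ^ 3) * q ^ n) = 0 := by
  have hσ := polyBounded_sum_divisors_pow 1
  simp only [pow_one] at hσ
  have hχ := polyBounded_sum_divisors_charWeight_sub k 2
  have split (n : ℕ) : ∑ d ∈ n.divisors, (d * charWeight k d : ℂ) =
      ∑ d ∈ n.divisors, d * (charWeight k d - 2 : ℂ) + 2 * ∑ d ∈ n.divisors, (d : ℂ) := by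
    rw [Finset.mul_sum, ← Finset.sum_add_distrib]
    exact Finset.sum_congr rfl fun d _ ↦ by ring
  have hsq := tsum_sum_divisors_charWeight_sq hk hq
  simp only [split, mul_add, mul_left_comm _ (2 : ℂ)] at hsq
  rw [hχ.tsum_add_const_mul hσ 2 hq, hχ.natCast_mul.tsum_add_const_mul hσ.natCast_mul 2 hq] at hsq
  have hε : (quadraticChar (ZMod 5) k : ℂ) ^ 2 = 1 := by exact_mod_cast quadraticChar_sq_one hk
  rw [hκ]
  linear_combination hsq - 4 * tsum_sum_divisors_sq hq + hε / 100

/-- The function `q ^ κ * ∏ 1 / ((1 - q ^ (5n + r)) (1 - q ^ (5n + s)))` of `τ`, where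
`q = exp (2πiτ)`; the Rogers–Ramanujan characters are the cases `{r, s} = {2, 3}, {1, 4}`. -/
noncomputable def levelFiveProduct (κ : ℂ) (r s : ℕ) (τ : ℂ) : ℂ :=
  cexp (2 * π * I * τ * κ) *
    ∏' n : ℕ, ((1 - cexp (2 * π * I * τ) ^ (5 * n + r)) *
      (1 - cexp (2 * π * I * τ) ^ (5 * n + s)))⁻¹

lemma eqOn_levelFiveProduct (κ : ℂ) {r s : ℕ} (hr : r ≠ 0) (hs : s ≠ 0) (hrs : r + s = 5) :
    UpperHalfPlane.upperHalfPlaneSet.EqOn (levelFiveProduct κ r s)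
      (qPowExp κ fun n ↦ ∑ d ∈ n.divisors, d * (charWeight r d - 2 : ℂ)) := by
  intro τ hτ
  have hq : ‖cexp (2 * π * I * τ)‖ < 1 := UpperHalfPlane.norm_exp_two_pi_I_lt_one ⟨τ, hτ⟩
  have hprod := (hasProd_one_sub_pow_inv hq (m := 5) hr (by omega)).mul
    (hasProd_one_sub_pow_inv hq (m := 5) hs (by omega))
  have hbdd (t : ℕ) : PolyBounded fun n ↦
      (∑ d ∈ n.divisors, d * if (d : ZMod 5) = t then (1 : ℂ) else 0) / n :=
    (PolyBounded.of_norm_le 1 fun n ↦ by split_ifs <;> simp).natCast_mul.sum_divisors.div_natCast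
  have hneg : -(r : ZMod 5) = s := by
    rw [neg_eq_iff_add_eq_zero]
    exact_mod_cast congrArg (Nat.cast (R := ZMod 5)) hrs
  simp only [← mul_inv] at hprod
  rw [levelFiveProduct, hprod.tprod_eq, qPowExp, Complex.exp_add, ← Complex.exp_add (tsum _),
    ← ((hbdd r).summable hq).tsum_add ((hbdd s).summable hq)]
  refine congrArg (_ * cexp ·) (tsum_congr fun n ↦ ?_)
  rw [← add_mul, ← add_div, ← Finset.sum_add_distrib]
  congr 2
  refine Finset.sum_congr rfl fun d _ ↦ ?_
  rw [charWeight, hneg]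
  push_cast
  ring

theorem levelFiveProduct_ode {κ : ℂ} {r s : ℕ} (hr : r ≠ 0) (hs : s ≠ 0) (hrs : r + s = 5)
    (hκ : κ = 1 / 12 - quadraticChar (ZMod 5) r / 10) {τ : ℂ} (hτ : 0 < τ.im) :
    qDeriv (qDeriv (levelFiveProduct κ r s)) τ +
      2 * (-(1 / 12) + 2 * ∑' n : ℕ, (∑ d ∈ n.divisors, (d : ℂ)) * cexp (2 * π * I * τ) ^ n) *
        qDeriv (levelFiveProduct κ r s) τ -
      11 / 5 * (1 / 720 + 1 / 3 *
        ∑' n : ℕ, (∑ d ∈ n.divisors, (d : ℂ) ^ 3) * cexp (2 * π * I * τ) ^ n) *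
        levelFiveProduct κ r s τ = 0 := by
  have hq : ‖cexp (2 * π * I * τ)‖ < 1 := UpperHalfPlane.norm_exp_two_pi_I_lt_one ⟨τ, hτ⟩
  have hr' : (r : ZMod 5) ≠ 0 := fun h ↦ by
    have := Nat.le_of_dvd (by omega) ((ZMod.natCast_eq_zero_iff r 5).mp h)
    omega
  have hχ := polyBounded_sum_divisors_charWeight_sub r 2
  have hy := eqOn_levelFiveProduct κ hr hs hrs
  rw [eqOn_qDeriv (eqOn_qDeriv hy) hτ, eqOn_qDeriv hy hτ, hy hτ,
    hχ.qDeriv_qDeriv_qPowExp (by simp) κ hτ, hχ.qDeriv_qPowExp (by simp) κ hτ]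
  linear_combination qPowExp κ (fun n ↦ ∑ d ∈ n.divisors, d * (charWeight r d - 2 : ℂ)) τ *
    riccati_charWeight hr' hq hκ

end RogersRamanujan

/-- Both modified `c = -22/5` characters `y₁ = q^{11/60}∏ 1/((1-q^{5n+2})(1-q^{5n+3}))`
and `y₂ = q^{-1/60}∏ 1/((1-q^{5n+1})(1-q^{5n+4}))` (as functions of `τ`, `q = e^{2πiτ}`,
with `' = (2πi)⁻¹ d/dτ = q d/dq`) satisfy
`F'' + 2Ẽ₂(q)F' - (11/5)Ẽ₄(q)F = 0`. -/
theorem RR_characters_ODE (y₁ y₂ : ℂ → ℂ)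
    (hy₁ : y₁ = fun τ : ℂ => Complex.exp (2 * π * I * τ * (11 / 60)) *
      ∏' n : ℕ, ((1 - Complex.exp (2 * π * I * τ) ^ (5 * n + 2))
        * (1 - Complex.exp (2 * π * I * τ) ^ (5 * n + 3)))⁻¹)
    (hy₂ : y₂ = fun τ : ℂ => Complex.exp (2 * π * I * τ * (-1 / 60)) *
      ∏' n : ℕ, ((1 - Complex.exp (2 * π * I * τ) ^ (5 * n + 1))
        * (1 - Complex.exp (2 * π * I * τ) ^ (5 * n + 4)))⁻¹)
    (D : (ℂ → ℂ) → (ℂ → ℂ)) (hD : D = fun f => fun τ => (2 * π * I)⁻¹ * deriv f τ)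
    (G₂ G₄ : ℂ → ℂ)
    (hG₂ : G₂ = fun q : ℂ =>
      -(1 / 12) + 2 * ∑' n : ℕ, (∑ d ∈ (n + 1).divisors, (d : ℂ)) * q ^ (n + 1))
    (hG₄ : G₄ = fun q : ℂ =>
      1 / 720 + 1 / 3 * ∑' n : ℕ, (∑ d ∈ (n + 1).divisors, (d : ℂ) ^ 3) * q ^ (n + 1))
    (τ : ℂ) (hτ : 0 < τ.im) :
    (D (D y₁) τ + 2 * G₂ (Complex.exp (2 * π * I * τ)) * D y₁ τ
        - 11 / 5 * G₄ (Complex.exp (2 * π * I * τ)) * y₁ τ = 0) ∧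
      (D (D y₂) τ + 2 * G₂ (Complex.exp (2 * π * I * τ)) * D y₂ τ
        - 11 / 5 * G₄ (Complex.exp (2 * π * I * τ)) * y₂ τ = 0) := by
  obtain rfl : D = qDeriv := hD
  obtain rfl : y₁ = levelFiveProduct (11 / 60) 2 3 := hy₁
  obtain rfl : y₂ = levelFiveProduct (-1 / 60) 1 4 := hy₂
  have hχ₂ : quadraticChar (ZMod 5) (2 : ℕ) = -1 := by decide
  have hχ₁ : quadraticChar (ZMod 5) (1 : ℕ) = 1 := by decide
  simp only [hG₂, hG₄, tsum_sum_divisors_succ]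
  exact ⟨levelFiveProduct_ode (by norm_num) (by norm_num) rfl (by rw [hχ₂]; norm_num) hτ,
    levelFiveProduct_ode (by norm_num) (by norm_num) rfl (by rw [hχ₁]; norm_num) hτ⟩
end

section
/- Define A₁(q) = 17/42 + ∑_{n≥1, n≡2,3,4,5 mod 7} n q^n/(1-q^n), A₂(q) = 5/42 + ∑_{n≥1, n≡1,3,4,6 mod 7} n q^n/(1-q^n), A₃(q) = -1/42 + ∑_{n≥1, n≡1,2,5,6 mod 7} n q^n/(1-q^n). Then det[[1,1,1],[A₁,A₂,A₃],[A₁',A₂',A₃']] + det[[1,1,1],[A₁,A₂,A₃],[A₁²,A₂²,A₃²]] = -(6/7³)·((q;q)_∞⁷/(q⁷;q⁷)_∞)², where ' = q d/dq. -/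
open scoped BigOperators

/-!
The series `A₁`, `A₂`, `A₃` are, up to the factor `2πi`, the logarithmic derivatives in `τ` of the
characters `χ₁`, `χ₂`, `χ₃` of the Virasoro minimal model `(2, 7)`, where `q = exp (2πiτ)`; hence
the sum of the two determinants is the Wronskian of the characters divided by `(2πi)³ χ₁ χ₂ χ₃`.
By the Jacobi triple product the characters are quotients of theta series by the Dedekind eta
function `η`, and Poisson summation shows that `τ ↦ -1 / τ` acts on their span by a constant matrix.
So their Wronskian and `η ^ 12` both have weight 6, up to constant multipliers, and their quotient
is a holomorphic function of `q`, including at `q = 0`, of weight 0. By the maximum modulus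
principle it is constant, and its value at `q = 0` is a multiple of the Vandermonde determinant of
`17 / 42`, `5 / 42`, `-1 / 42`.
-/

section TripleProduct

open Filter Topology Finset

/-- The infinite `q`-shifted factorial `(x; q)_∞`. -/
noncomputable def qPoch (q x : ℂ) : ℂ := ∏' n : ℕ, (1 - x * q ^ n)

variable {q : ℂ}

lemma tendsto_qPoch (hq : ‖q‖ < 1) (x : ℂ) :
    Tendsto (fun N : ℕ => ∏ i ∈ range N, (1 - x * q ^ i)) atTop (𝓝 (qPoch q x)) := by
  have hsum : Summable fun n : ℕ => ‖-(x * q ^ n)‖ := by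
    simpa using (summable_geometric_of_lt_one (norm_nonneg q) hq).mul_left ‖x‖
  simpa only [qPoch, ← sub_eq_add_neg] using
    (multipliable_one_add_of_summable hsum).hasProd.tendsto_prod_nat

lemma norm_pow_lt_one (hq : ‖q‖ < 1) {n : ℕ} (hn : n ≠ 0) : ‖q ^ n‖ < 1 := by
  rw [norm_pow]
  exact pow_lt_one₀ (norm_nonneg q) hq hn

lemma one_sub_pow_succ_ne_zero (hq : ‖q‖ < 1) (n : ℕ) : 1 - q ^ (n + 1) ≠ 0 := by
  refine sub_ne_zero.2 fun h => (norm_pow_lt_one hq n.succ_ne_zero).ne ?_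
  rw [← h, norm_one]

lemma qPoch_self_ne_zero (hq : ‖q‖ < 1) : qPoch q q ≠ 0 := by
  have hsum : Summable fun n : ℕ => ‖-(q ^ (n + 1))‖ := by
    simpa using (summable_nat_add_iff 1).2 (summable_geometric_of_lt_one (norm_nonneg q) hq)
  have := tprod_one_add_ne_zero_of_summable
    (fun n => by simpa only [← sub_eq_add_neg] using one_sub_pow_succ_ne_zero hq n) hsum
  simpa only [qPoch, ← pow_succ', ← sub_eq_add_neg] using this

/-- The reciprocal `1 / (q; q)_n`, extended by zero to negative `n`. -/
noncomputable def invQFact (q : ℂ) (n : ℤ) : ℂ :=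
  if n < 0 then 0 else (∏ i ∈ range n.toNat, (1 - q * q ^ i))⁻¹

lemma invQFact_sub_one (hq : ‖q‖ < 1) (n : ℤ) :
    invQFact q (n - 1) = (1 - q ^ n) * invQFact q n := by
  rcases lt_trichotomy n 0 with hn | rfl | hn
  · simp [invQFact, hn, show n - 1 < 0 by lia]
  · simp [invQFact]
  · lift n to ℕ using hn.le
    obtain ⟨m, rfl⟩ := Nat.exists_eq_succ_of_ne_zero (Nat.cast_pos.1 hn).ne'
    have hm := one_sub_pow_succ_ne_zero hq m
    rw [zpow_natCast, Nat.succ_eq_add_one]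
    simp only [invQFact, Nat.cast_succ, add_sub_cancel_right, Int.toNat_natCast,
      Int.toNat_natCast_add_one, show ¬ (m : ℤ) < 0 by lia, show ¬ (m : ℤ) + 1 < 0 by lia,
      if_false, prod_range_succ, ← pow_succ', mul_inv]
    field_simp

lemma tendsto_invQFact (hq : ‖q‖ < 1) :
    Tendsto (invQFact q) atTop (𝓝 (qPoch q q)⁻¹) := by
  have htoNat : Tendsto Int.toNat atTop atTop :=
    tendsto_atTop_atTop.2 fun b => ⟨b, fun a ha => by lia⟩
  refine (((tendsto_qPoch hq q).inv₀ (qPoch_self_ne_zero hq)).comp htoNat).congr' ?_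
  filter_upwards [eventually_ge_atTop 0] with n hn
  simp [invQFact, hn.not_gt]

lemma exists_norm_invQFact_le (hq : ‖q‖ < 1) : ∃ C, ∀ n, ‖invQFact q n‖ ≤ C := by
  obtain ⟨C, hC⟩ :=
    ((tendsto_qPoch hq q).inv₀ (qPoch_self_ne_zero hq)).norm.bddAbove_range
  refine ⟨max C 0, fun n => ?_⟩
  unfold invQFact
  split_ifs
  · simp
  · exact le_max_of_le_left (hC ⟨n.toNat, rfl⟩)

/-- The coefficient `(q; q)_{2N} / ((q; q)_{N+k} (q; q)_{N-k})` of the finite form of the Jacobi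
triple product. -/
noncomputable def tripleCoeff (q : ℂ) (N : ℕ) (k : ℤ) : ℂ :=
  (∏ i ∈ range (2 * N), (1 - q * q ^ i)) * invQFact q (N + k) * invQFact q (N - k)

lemma exists_norm_tripleCoeff_le (hq : ‖q‖ < 1) : ∃ C, ∀ N k, ‖tripleCoeff q N k‖ ≤ C := by
  obtain ⟨C, hC⟩ := exists_norm_invQFact_le hq
  obtain ⟨B, hB⟩ := (tendsto_qPoch hq q).norm.bddAbove_range
  have hB0 : 0 ≤ B := (norm_nonneg _).trans (hB ⟨0, rfl⟩)
  have hC0 : 0 ≤ C := (norm_nonneg _).trans (hC 0)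
  refine ⟨B * C * C, fun N k => ?_⟩
  rw [tripleCoeff, norm_mul, norm_mul]
  gcongr
  exacts [hB ⟨2 * N, rfl⟩, hC _, hC _]

lemma tendsto_tripleCoeff (hq : ‖q‖ < 1) (k : ℤ) :
    Tendsto (fun N => tripleCoeff q N k) atTop (𝓝 (qPoch q q)⁻¹) := by
  have hcast : Tendsto (fun N : ℕ => (N : ℤ)) atTop atTop := tendsto_natCast_atTop_atTop
  have h := (((tendsto_qPoch hq q).comp (tendsto_id.const_mul_atTop' two_pos)).mul
    ((tendsto_invQFact hq).comp (tendsto_atTop_add_const_right _ k hcast))).mul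
    ((tendsto_invQFact hq).comp (tendsto_atTop_add_const_right _ (-k) hcast))
  rwa [mul_inv_cancel₀ (qPoch_self_ne_zero hq), one_mul] at h

lemma tripleCoeff_zero (q : ℂ) (k : ℤ) : tripleCoeff q 0 k = if k = 0 then 1 else 0 := by
  rcases lt_trichotomy k 0 with hk | rfl | hk
  · simp [tripleCoeff, invQFact, hk, hk.ne]
  · simp [tripleCoeff, invQFact]
  · simp [tripleCoeff, invQFact, hk, hk.ne']

lemma tripleCoeff_succ (hq : ‖q‖ < 1) (h0 : q ≠ 0) (N : ℕ) (k : ℤ) :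
    tripleCoeff q (N + 1) k = (1 + q ^ (2 * N + 1)) * tripleCoeff q N k
      + q ^ (N + 1 - k : ℤ) * tripleCoeff q N (k - 1)
      + q ^ (N + 1 + k : ℤ) * tripleCoeff q N (k + 1) := by
  have step (m n : ℤ) (h : m = n - 1) : invQFact q m = (1 - q ^ n) * invQFact q n := by
    rw [h, invQFact_sub_one hq]
  have zpow_shift (j : ℤ) : q ^ (N + j) = q ^ N * q ^ j := by rw [zpow_add₀ h0, zpow_natCast]
  simp only [tripleCoeff, Nat.cast_succ]
  rw [show 2 * (N + 1) = 2 * N + 1 + 1 by ring, prod_range_succ, prod_range_succ,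
    step (N + (k - 1)) (N + k) (by ring), step (N - (k + 1)) (N - k) (by ring),
    step (N + k) (N + 1 + k) (by ring), step (N - k) (N + 1 - k) (by ring),
    show (N : ℤ) - (k - 1) = N + 1 - k by ring, show (N : ℤ) + (k + 1) = N + 1 + k by ring]
  simp only [sub_eq_add_neg _ k, add_assoc (N : ℤ) 1, zpow_shift, zpow_one_add₀ h0, zpow_neg]
  have hk : q ^ k ≠ 0 := zpow_ne_zero _ h0
  field_simp
  ring

lemma zpow_sq_mul_zpow_succ {p w : ℂ} (hp : p ≠ 0) (hw : w ≠ 0) (k : ℤ) :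
    p ^ ((k + 1) ^ 2) * w ^ (k + 1) = p * (p ^ 2) ^ k * w * (p ^ k ^ 2 * w ^ k) := by
  rw [show (k + 1) ^ 2 = k ^ 2 + (2 * k + 1) by ring, zpow_add₀ hp, zpow_add₀ hp, zpow_add₀ hw,
    zpow_mul, zpow_one, zpow_one]
  norm_cast
  ring

lemma hasSum_tripleCoeff {p w : ℂ} (hp : ‖p‖ < 1) (hp0 : p ≠ 0) (hw : w ≠ 0) (N : ℕ) :
    HasSum (fun k : ℤ => tripleCoeff (p ^ 2) N k * (p ^ k ^ 2 * w ^ k))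
      ((∏ i ∈ range N, (1 - -(p * w) * (p ^ 2) ^ i)) *
        ∏ i ∈ range N, (1 - -(p / w) * (p ^ 2) ^ i)) := by
  have hq : ‖p ^ 2‖ < 1 := norm_pow_lt_one hp two_ne_zero
  have hq0 : p ^ 2 ≠ 0 := pow_ne_zero 2 hp0
  induction N with
  | zero =>
    convert hasSum_ite_eq (0 : ℤ) (1 : ℂ) using 1
    · ext k
      rw [tripleCoeff_zero]
      split_ifs with h <;> simp [h]
    · simp
  | succ N ih =>
    have hleft := ((Equiv.subRight (1 : ℤ)).hasSum_iff.2 ih).mul_left (p * w * (p ^ 2) ^ N)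
    have hright := ((Equiv.addRight (1 : ℤ)).hasSum_iff.2 ih).mul_left (p / w * (p ^ 2) ^ N)
    have hsum := ((ih.mul_left (1 + (p ^ 2) ^ (2 * N + 1))).add hleft).add hright
    rw [prod_range_succ, prod_range_succ]
    convert! hsum using 1
    · ext k
      have hsucc := zpow_sq_mul_zpow_succ hp0 hw k
      have hpred := zpow_sq_mul_zpow_succ hp0 hw (k - 1)
      have hk : (p ^ 2) ^ k ≠ 0 := zpow_ne_zero _ hq0
      rw [sub_add_cancel, zpow_sub_one₀ hq0] at hpred
      simp only [Function.comp, Equiv.subRight_apply, Equiv.coe_addRight]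
      rw [tripleCoeff_succ hq hq0, hsucc, zpow_add₀ hq0, zpow_sub₀ hq0, zpow_add₀ hq0,
        zpow_natCast, zpow_one, hpred]
      field_simp
    · field_simp
      ring

lemma jacobiTheta₂_term_eq_zpow (k : ℤ) (z τ : ℂ) :
    jacobiTheta₂_term k z τ = Complex.exp (Real.pi * Complex.I * τ) ^ k ^ 2 *
      Complex.exp (2 * Real.pi * Complex.I * z) ^ k := by
  rw [jacobiTheta₂_term, ← Complex.exp_int_mul, ← Complex.exp_int_mul, ← Complex.exp_add]
  push_cast
  ring_nf

/-- The Jacobi triple product, as the limit of its finite form `hasSum_tripleCoeff`. -/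
theorem jacobiTheta₂_eq_qPoch_mul {z τ p w : ℂ} (hτ : 0 < τ.im)
    (hp : p = Complex.exp (Real.pi * Complex.I * τ))
    (hw : w = Complex.exp (2 * Real.pi * Complex.I * z)) :
    jacobiTheta₂ z τ =
      qPoch (p ^ 2) (p ^ 2) * (qPoch (p ^ 2) (-(p * w)) * qPoch (p ^ 2) (-(p / w))) := by
  have hp1 : ‖p‖ < 1 := by
    rw [hp, Complex.norm_exp, Real.exp_lt_one_iff]
    simpa using mul_pos Real.pi_pos hτ
  have hq : ‖p ^ 2‖ < 1 := norm_pow_lt_one hp1 two_ne_zero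
  have hp0 : p ≠ 0 := hp ▸ Complex.exp_ne_zero _
  have hw0 : w ≠ 0 := hw ▸ Complex.exp_ne_zero _
  have hfinite (N : ℕ) := (hasSum_tripleCoeff hp1 hp0 hw0 N).tsum_eq
  simp only [hp, hw, ← jacobiTheta₂_term_eq_zpow] at hfinite
  simp only [← hp, ← hw] at hfinite
  obtain ⟨C, hC⟩ := exists_norm_tripleCoeff_le hq
  have hsum : Tendsto (fun N => ∑' k, tripleCoeff (p ^ 2) N k * jacobiTheta₂_term k z τ) atTop
      (𝓝 (∑' k, (qPoch (p ^ 2) (p ^ 2))⁻¹ * jacobiTheta₂_term k z τ)) := by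
    refine tendsto_tsum_of_dominated_convergence
      (((summable_jacobiTheta₂_term_iff z τ).2 hτ).norm.mul_left C)
      (fun k => (tendsto_tripleCoeff hq k).mul_const _) (.of_forall fun N k => ?_)
    rw [norm_mul]
    gcongr
    exact hC N k
  have hprod := tendsto_nhds_unique (hsum.congr hfinite)
    ((tendsto_qPoch hq _).mul (tendsto_qPoch hq _))
  rw [tsum_mul_left] at hprod
  rw [← hprod, mul_inv_cancel_left₀ (qPoch_self_ne_zero hq), jacobiTheta₂]

end TripleProduct

section EulerProducts

open Filter Finset Metric

/-- The part `∏ (1 - q ^ n)` of Euler's product over the `n ≥ 1` with `P n`. -/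
noncomputable def eulerProd (P : ℕ → Prop) [DecidablePred P] (q : ℂ) : ℂ :=
  ∏' n : ℕ, (1 + if P (n + 1) then -q ^ (n + 1) else 0)

/-- The part of the Lambert series `∑ n q ^ n / (1 - q ^ n)` over the `n ≥ 1` with `P n`. -/
noncomputable def lambertSum (P : ℕ → Prop) [DecidablePred P] (q : ℂ) : ℂ :=
  ∑' n : ℕ, if P (n + 1) then ((n : ℂ) + 1) * q ^ (n + 1) / (1 - q ^ (n + 1)) else 0

variable (P : ℕ → Prop) [DecidablePred P] {q : ℂ}

lemma norm_ite_neg_pow_le (q : ℂ) (n : ℕ) :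
    ‖if P (n + 1) then -q ^ (n + 1) else 0‖ ≤ ‖q‖ ^ (n + 1) := by
  split_ifs <;> simp

lemma summable_norm_pow_succ (hq : ‖q‖ < 1) : Summable fun n : ℕ => ‖q‖ ^ (n + 1) :=
  (summable_nat_add_iff 1).2 (summable_geometric_of_lt_one (norm_nonneg q) hq)

lemma summable_norm_ite_neg_pow (hq : ‖q‖ < 1) :
    Summable fun n : ℕ => ‖if P (n + 1) then -q ^ (n + 1) else 0‖ :=
  .of_nonneg_of_le (fun _ => norm_nonneg _) (norm_ite_neg_pow_le P q) (summable_norm_pow_succ hq)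

lemma eulerProd_factor_ne_zero (hq : ‖q‖ < 1) (n : ℕ) :
    (1 + if P (n + 1) then -q ^ (n + 1) else 0) ≠ 0 := by
  split_ifs
  · simpa only [← sub_eq_add_neg] using one_sub_pow_succ_ne_zero hq n
  · simp

lemma eulerProd_ne_zero (hq : ‖q‖ < 1) : eulerProd P q ≠ 0 :=
  tprod_one_add_ne_zero_of_summable (eulerProd_factor_ne_zero P hq) (summable_norm_ite_neg_pow P hq)

lemma differentiable_eulerProd_factor (n : ℕ) :
    Differentiable ℂ fun q : ℂ => 1 + if P (n + 1) then -q ^ (n + 1) else 0 := by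
  split_ifs <;> fun_prop

lemma multipliableLocallyUniformlyOn_eulerProd {r : ℝ} (hr0 : 0 ≤ r) (hr : r < 1) :
    MultipliableLocallyUniformlyOn
      (fun (n : ℕ) (q : ℂ) => 1 + if P (n + 1) then -q ^ (n + 1) else 0) (ball 0 r) := by
  refine Summable.multipliableLocallyUniformlyOn_nat_one_add isOpen_ball
    ((summable_nat_add_iff 1).2 (summable_geometric_of_lt_one hr0 hr))
    (.of_forall fun n q hq => (norm_ite_neg_pow_le P q n).trans ?_)
    fun n => by split_ifs <;> fun_prop
  gcongr
  exact (mem_ball_zero_iff.1 hq).le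

lemma differentiableOn_eulerProd : DifferentiableOn ℂ (eulerProd P) (ball 0 1) := by
  intro q hq
  obtain ⟨r, hqr, hr⟩ := exists_between (mem_ball_zero_iff.1 hq)
  refine DifferentiableAt.differentiableWithinAt ?_
  have hmul := multipliableLocallyUniformlyOn_eulerProd P ((norm_nonneg q).trans hqr.le) hr
  refine (hmul.hasProdLocallyUniformlyOn.differentiableOn (.of_forall fun s => ?_)
    isOpen_ball).differentiableAt (isOpen_ball.mem_nhds (mem_ball_zero_iff.2 hqr))
  simpa [prod_fn] using DifferentiableOn.finsetProd fun n _ =>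
    (differentiable_eulerProd_factor P n).differentiableOn

lemma lambertSum_zero : lambertSum P 0 = 0 := by
  simp [lambertSum]

lemma eulerProd_zero : eulerProd P 0 = 1 := by
  simp [eulerProd]

lemma mul_logDeriv_eulerProd_factor (q : ℂ) (n : ℕ) :
    q * logDeriv (fun q : ℂ => 1 + if P (n + 1) then -q ^ (n + 1) else 0) q =
      -if P (n + 1) then ((n : ℂ) + 1) * q ^ (n + 1) / (1 - q ^ (n + 1)) else 0 := by
  rw [logDeriv_apply]
  split_ifs
  · rw [deriv_const_add, deriv.fun_neg, deriv_pow_field, Nat.add_sub_cancel, pow_succ]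
    push_cast
    ring
  · simp

lemma summable_lambertSum (hq : ‖q‖ < 1) : Summable fun n : ℕ =>
    if P (n + 1) then ((n : ℂ) + 1) * q ^ (n + 1) / (1 - q ^ (n + 1)) else 0 := by
  refine .of_norm_bounded ((summable_nat_add_iff 1).2
    (summable_norm_pow_mul_geometric_div_one_sub 1 hq).norm) fun n => ?_
  split_ifs
  · simp
  · exact norm_zero.trans_le (norm_nonneg _)

lemma summable_logDeriv_eulerProd_factor (hq : ‖q‖ < 1) : Summable fun n : ℕ =>
    logDeriv (fun q : ℂ => 1 + if P (n + 1) then -q ^ (n + 1) else 0) q := by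
  rcases eq_or_ne q 0 with rfl | hq0
  · refine summable_of_ne_finset_zero (s := {0}) fun n hn => ?_
    have hn : n ≠ 0 := by simpa using hn
    rw [logDeriv_apply]
    split_ifs <;> simp [hn]
  · refine ((summable_lambertSum P hq).mul_left (-q⁻¹)).congr fun n => ?_
    rw [← mul_right_inj' hq0, mul_logDeriv_eulerProd_factor]
    field_simp

lemma mul_logDeriv_eulerProd (hq : ‖q‖ < 1) :
    q * logDeriv (eulerProd P) q = -lambertSum P q := by
  obtain ⟨r, hqr, hr⟩ := exists_between hq
  have hlog := logDeriv_tprod_eq_tsum isOpen_ball (mem_ball_zero_iff.2 hqr)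
    (eulerProd_factor_ne_zero P hq)
    (fun n => (differentiable_eulerProd_factor P n).differentiableOn)
    (summable_logDeriv_eulerProd_factor P hq)
    (multipliableLocallyUniformlyOn_eulerProd P ((norm_nonneg q).trans hqr.le) hr)
    (eulerProd_ne_zero P hq)
  unfold eulerProd
  rw [hlog, ← tsum_mul_left, lambertSum, ← tsum_neg]
  exact tsum_congr (mul_logDeriv_eulerProd_factor P q)

lemma differentiableOn_lambertSum : DifferentiableOn ℂ (lambertSum P) (ball 0 1) := by
  have hE := differentiableOn_eulerProd P
  have hne (q : ℂ) (hq : q ∈ ball 0 1) := eulerProd_ne_zero P (mem_ball_zero_iff.1 hq)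
  refine (differentiableOn_id.mul ((hE.deriv isOpen_ball).div hE hne)).neg.congr fun q hq => ?_
  exact neg_eq_iff_eq_neg.1 (mul_logDeriv_eulerProd P (mem_ball_zero_iff.1 hq)).symm

lemma eulerProd_mul_eulerProd (Q R : ℕ → Prop) [DecidablePred Q] [DecidablePred R]
    (hd : ∀ n, ¬ (P n ∧ Q n)) (hR : ∀ n, R n ↔ P n ∨ Q n) (hq : ‖q‖ < 1) :
    eulerProd P q * eulerProd Q q = eulerProd R q := by
  rw [eulerProd, eulerProd,
    ← (multipliable_one_add_of_summable (summable_norm_ite_neg_pow P hq)).tprod_mul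
      (multipliable_one_add_of_summable (summable_norm_ite_neg_pow Q hq))]
  refine tprod_congr fun n => ?_
  have hdn := hd (n + 1)
  by_cases hP : P (n + 1) <;> by_cases hQ : Q (n + 1) <;> simp [hR (n + 1), hP, hQ] at hdn ⊢

lemma eulerProd_congr (Q : ℕ → Prop) [DecidablePred Q] (h : ∀ n, P n ↔ Q n) (q : ℂ) :
    eulerProd P q = eulerProd Q q := by
  simp only [eulerProd, h]

lemma eulerProd_true (q : ℂ) : eulerProd (fun _ => True) q = ∏' n : ℕ, (1 - q ^ (n + 1)) := by
  simp only [eulerProd, if_true, sub_eq_add_neg]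

lemma qPoch_pow_eq_eulerProd (q : ℂ) {N j : ℕ} (hj : 0 < j) (hjN : j ≤ N) :
    qPoch (q ^ N) (q ^ j) = eulerProd (fun n => n % N = j % N) q := by
  have hN : 0 < N := hj.trans_le hjN
  have hinj : Function.Injective fun n : ℕ => N * n + (j - 1) := fun a b hab => by
    simpa [hN.ne'] using hab
  have hsupp : Function.mulSupport
      (fun n : ℕ => (1 : ℂ) + if (n + 1) % N = j % N then -q ^ (n + 1) else 0) ⊆
      Set.range fun n : ℕ => N * n + (j - 1) := by
    intro n hn
    have hmod : n + 1 ≡ j [MOD N] := by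
      by_contra hc
      exact hn ((congrArg (1 + ·) (if_neg hc)).trans (add_zero 1))
    have hjn : j ≤ n + 1 := by
      rcases hjN.lt_or_eq with hlt | rfl
      · exact (Nat.mod_eq_of_lt hlt).symm.trans_le (hmod.symm.trans_le (Nat.mod_le _ _))
      · exact Nat.le_of_dvd n.succ_pos ((hmod.dvd_iff dvd_rfl).2 dvd_rfl)
    obtain ⟨m, hm⟩ := (Nat.modEq_iff_dvd' hjn).1 hmod.symm
    exact ⟨m, by lia⟩
  rw [qPoch, eulerProd, ← hinj.tprod_eq hsupp]
  refine tprod_congr fun n => ?_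
  rw [show N * n + (j - 1) + 1 = j + N * n by lia, Nat.add_mul_mod_self_left, if_pos rfl,
    ← sub_eq_add_neg, pow_add, pow_mul]

end EulerProducts

section ThetaSeries

open Complex Function.Periodic
open scoped Real

/-- The theta series `∑ (-1) ^ n q ^ ((2 N n + ρ) ^ 2 / (8 N))` as a function of `τ`, where
`q = exp (2 π i τ)`. For `N = 3` and `ρ = 1` it is the Dedekind eta function. -/
noncomputable def thetaSeries (N : ℕ) (ρ : ℤ) (τ : ℂ) : ℂ :=
  ∑' n : ℤ, (-1) ^ n * cexp (π * I * τ * (2 * N * n + ρ) ^ 2 / (4 * N))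

variable {N : ℕ} {τ : ℂ}

lemma neg_one_zpow_eq_cexp (n : ℤ) : (-1 : ℂ) ^ n = cexp (n * (π * I)) := by
  rw [exp_int_mul, exp_pi_mul_I]

lemma thetaSeries_neg (N : ℕ) (ρ : ℤ) (τ : ℂ) : thetaSeries N (-ρ) τ = thetaSeries N ρ τ := by
  rw [thetaSeries, ← (Equiv.neg ℤ).tsum_eq]
  refine tsum_congr fun n => ?_
  rw [Equiv.neg_apply, zpow_neg, ← inv_zpow, inv_neg_one]
  push_cast
  ring_nf

lemma thetaSeries_add_two_mul (N : ℕ) (ρ : ℤ) (τ : ℂ) :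
    thetaSeries N (ρ + 2 * N) τ = -thetaSeries N ρ τ := by
  rw [thetaSeries, thetaSeries, ← (Equiv.addRight (1 : ℤ)).tsum_eq (fun n : ℤ =>
    (-1 : ℂ) ^ n * cexp (π * I * τ * (2 * N * n + ρ) ^ 2 / (4 * N))), ← tsum_neg]
  refine tsum_congr fun n => ?_
  rw [Equiv.coe_addRight, zpow_add_one₀ (by norm_num)]
  push_cast
  ring_nf

lemma thetaSeries_two_mul_sub (N : ℕ) (ρ : ℤ) (τ : ℂ) :
    thetaSeries N (2 * N - ρ) τ = -thetaSeries N ρ τ := by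
  rw [← thetaSeries_neg N ρ, ← thetaSeries_add_two_mul, neg_add_eq_sub]

lemma thetaSeries_self (N : ℕ) (τ : ℂ) : thetaSeries N N τ = 0 := by
  have h := thetaSeries_two_mul_sub N N τ
  rwa [two_mul, add_sub_cancel_right, self_eq_neg] at h

lemma thetaSeries_eq_jacobiTheta₂ (hN : N ≠ 0) (ρ : ℤ) (τ : ℂ) : thetaSeries N ρ τ =
    cexp (π * I * τ * ρ ^ 2 / (4 * N)) * jacobiTheta₂ ((ρ * τ + 1) / 2) (N * τ) := by
  have hN' : (N : ℂ) ≠ 0 := Nat.cast_ne_zero.2 hN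
  rw [thetaSeries, jacobiTheta₂, ← tsum_mul_left]
  refine tsum_congr fun n => ?_
  rw [neg_one_zpow_eq_cexp, jacobiTheta₂_term, ← Complex.exp_add, ← Complex.exp_add]
  congr 1
  field_simp
  ring

theorem thetaSeries_eq_eulerProd {a : ℕ} (ha : 0 < a) (haN : 2 * a < N) (hτ : 0 < τ.im) :
    thetaSeries N (N - 2 * a) τ = cexp (π * I * τ * (N - 2 * a) ^ 2 / (4 * N)) *
      eulerProd (fun n => n % N = 0 ∨ n % N = a ∨ n % N = N - a) (qParam 1 τ) := by
  have hN : 0 < N := by lia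
  have hq := norm_qParam_lt_one one_pos hτ
  have hqpow (j : ℕ) : qParam 1 τ ^ j = cexp (2 * π * I * τ * j) := by
    rw [qParam, ← Complex.exp_nat_mul]
    push_cast
    ring_nf
  rw [thetaSeries_eq_jacobiTheta₂ hN.ne',
    jacobiTheta₂_eq_qPoch_mul (by simpa [hN] using hτ) rfl rfl]
  have hp : cexp (π * I * (N * τ)) ^ 2 = qParam 1 τ ^ N := by
    rw [hqpow, ← Complex.exp_nat_mul]
    push_cast
    ring_nf
  have hw : -(cexp (π * I * (N * τ)) *
      cexp (2 * π * I * ((((N - 2 * a : ℤ) : ℂ) * τ + 1) / 2))) = qParam 1 τ ^ (N - a) := by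
    rw [hqpow, Nat.cast_sub (by lia), ← Complex.exp_add, ← neg_one_mul, ← exp_pi_mul_I,
      ← Complex.exp_add, Complex.exp_eq_exp_iff_exists_int]
    refine ⟨1, ?_⟩
    push_cast
    ring
  have hw' : -(cexp (π * I * (N * τ)) /
      cexp (2 * π * I * ((((N - 2 * a : ℤ) : ℂ) * τ + 1) / 2))) = qParam 1 τ ^ a := by
    rw [hqpow, ← Complex.exp_sub, ← neg_one_mul, ← exp_pi_mul_I, ← Complex.exp_add]
    congr 1
    push_cast
    ring
  rw [hp, hw, hw', qPoch_pow_eq_eulerProd _ hN le_rfl, qPoch_pow_eq_eulerProd _ (by lia) (by lia),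
    qPoch_pow_eq_eulerProd _ ha (by lia), Nat.mod_self, Nat.mod_eq_of_lt (show N - a < N by lia),
    Nat.mod_eq_of_lt (show a < N by lia),
    eulerProd_mul_eulerProd _ _ (fun n => n % N = N - a ∨ n % N = a) (by lia) (by lia) hq,
    eulerProd_mul_eulerProd _ _ (fun n => n % N = 0 ∨ n % N = a ∨ n % N = N - a) (by lia) (by lia)
      hq]
  push_cast
  rfl

lemma tsum_int_eq_sum_fin [NeZero N] {f : ℤ → ℂ} (hf : Summable f) :
    ∑' k, f k = ∑ r : Fin N, ∑' n : ℤ, f (n * N + (r : ℕ)) := by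
  let e : Fin N × ℤ ≃ ℤ := (Equiv.prodComm _ _).trans (Int.divModEquiv N).symm
  rw [← e.tsum_eq]
  exact (e.summable_iff.2 hf).tsum_prod.trans (tsum_fintype _)

lemma natCast_mul_cpow (hN : N ≠ 0) {x : ℂ} (hx : x ≠ 0) (s : ℂ) :
    (N * x) ^ s = N ^ s * x ^ s := by
  have hN' : (N : ℂ) ≠ 0 := Nat.cast_ne_zero.2 hN
  rw [cpow_def_of_ne_zero (mul_ne_zero hN' hx), cpow_def_of_ne_zero hN', cpow_def_of_ne_zero hx,
    ← ofReal_natCast, log_ofReal_mul (by positivity) hx, ofReal_log (by positivity), add_mul,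
    Complex.exp_add]

lemma thetaSeries_neg_one_div_eq_mul_jacobiTheta₂ (hN : N ≠ 0) (ρ : ℤ) (hτ : τ ≠ 0) :
    thetaSeries N ρ (-1 / τ) = 1 / (N * (I / τ)) ^ (1 / 2 : ℂ) *
      (cexp (π * I * (τ - 2 * ρ) / (4 * N)) * jacobiTheta₂ ((ρ - τ) / (2 * N)) (τ / N)) := by
  have hN' : (N : ℂ) ≠ 0 := Nat.cast_ne_zero.2 hN
  have hexp : cexp (π * I * (-1 / τ) * ρ ^ 2 / (4 * N)) *
      cexp (-π * I * ((ρ * (-1 / τ) + 1) / 2) ^ 2 / (N * (-1 / τ))) =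
      cexp (π * I * (τ - 2 * ρ) / (4 * N)) := by
    rw [← Complex.exp_add]
    congr 1
    field_simp
    ring
  rw [thetaSeries_eq_jacobiTheta₂ hN, jacobiTheta₂_functional_equation,
    show -I * (N * (-1 / τ)) = N * (I / τ) by ring,
    show (ρ * (-1 / τ) + 1) / 2 / (N * (-1 / τ)) = (ρ - τ) / (2 * N) by field_simp; ring,
    show -1 / (N * (-1 / τ)) = τ / N by field_simp, ← hexp]
  ring

theorem thetaSeries_neg_one_div (hN : N ≠ 0) {ρ : ℤ} (hρ : Odd ρ) (hτ : 0 < τ.im) :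
    thetaSeries N ρ (-1 / τ) = 1 / (N ^ (1 / 2 : ℂ) * (I / τ) ^ (1 / 2 : ℂ)) *
      ∑ r : Fin N, cexp (π * I * ρ * (2 * (r : ℕ) - 1) / (2 * N)) *
        thetaSeries N (2 * (r : ℕ) - 1) τ := by
  have : NeZero N := ⟨hN⟩
  have hN' : (N : ℂ) ≠ 0 := Nat.cast_ne_zero.2 hN
  have hτ0 : τ ≠ 0 := UpperHalfPlane.ne_zero ⟨τ, hτ⟩
  have hdual : Summable fun k => jacobiTheta₂_term k ((ρ - τ) / (2 * N)) (τ / N) := by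
    refine (summable_jacobiTheta₂_term_iff _ _).2 ?_
    rw [← ofReal_natCast, div_ofReal_im]
    positivity
  rw [thetaSeries_neg_one_div_eq_mul_jacobiTheta₂ hN ρ hτ0, jacobiTheta₂,
    tsum_int_eq_sum_fin (N := N) hdual,
    natCast_mul_cpow hN (div_ne_zero I_ne_zero hτ0), Finset.mul_sum]
  congr 1
  refine Finset.sum_congr rfl fun r _ => ?_
  rw [thetaSeries, ← tsum_mul_left, ← tsum_mul_left]
  refine tsum_congr fun n => ?_
  have hsign : (-1 : ℂ) ^ n = cexp (n * ρ * (π * I)) := by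
    rw [← hρ.neg_one_zpow (α := ℂ), ← zpow_mul, mul_comm, neg_one_zpow_eq_cexp, Int.cast_mul]
  rw [hsign, jacobiTheta₂_term, ← Complex.exp_add, ← Complex.exp_add, ← Complex.exp_add]
  congr 1
  push_cast
  field_simp
  ring

end ThetaSeries

section Wronskian

open Matrix Filter Topology

/-- The Wronskian determinant of `n` functions; row `i` holds the derivatives of order `i`. -/
noncomputable def wronskian {n : ℕ} (f : Fin n → ℂ → ℂ) (z : ℂ) : ℂ :=
  (of fun i j : Fin n => iteratedDeriv i (f j) z).det

variable {n : ℕ} {z : ℂ}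

lemma wronskian_congr {f g : Fin n → ℂ → ℂ} (h : ∀ j, f j =ᶠ[𝓝 z] g j) :
    wronskian f z = wronskian g z := by
  unfold wronskian
  congr 1
  ext i j
  exact ((h j).iteratedDeriv_eq i)

lemma wronskian_sum_mul {f : Fin n → ℂ → ℂ} (S : Matrix (Fin n) (Fin n) ℂ)
    (hf : ∀ j, AnalyticAt ℂ (f j) z) :
    wronskian (fun i w => ∑ j, S i j * f j w) z = S.det * wronskian f z := by
  rw [wronskian, wronskian, mul_comm, ← det_transpose S, ← det_mul]
  congr 1
  ext i j
  have hsmooth (k : Fin n) : ContDiffAt ℂ i (f k) z := (hf k).contDiffAt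
  rw [of_apply, iteratedDeriv_fun_sum fun k _ => contDiffAt_const.mul (hsmooth k)]
  simp only [iteratedDeriv_const_mul_field, mul_apply, of_apply, transpose_apply]
  exact Finset.sum_congr rfl fun k _ => mul_comm _ _

lemma iteratedDeriv_two_comp {f φ : ℂ → ℂ} (hf : AnalyticAt ℂ f (φ z)) (hφ : AnalyticAt ℂ φ z) :
    iteratedDeriv 2 (f ∘ φ) z =
      iteratedDeriv 2 f (φ z) * deriv φ z ^ 2 + deriv f (φ z) * iteratedDeriv 2 φ z := by
  have hcomp : deriv (f ∘ φ) =ᶠ[𝓝 z] (deriv f ∘ φ) * deriv φ := by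
    filter_upwards [hφ.continuousAt.eventually hf.eventually_analyticAt, hφ.eventually_analyticAt]
      with w hfw hφw
    exact deriv_comp w hfw.differentiableAt hφw.differentiableAt
  have hdf := hf.deriv.differentiableAt
  simp only [iteratedDeriv_succ, iteratedDeriv_zero]
  rw [hcomp.deriv_eq, deriv_mul (hdf.comp z hφ.differentiableAt) hφ.deriv.differentiableAt,
    deriv_comp z hdf hφ.differentiableAt, Function.comp_apply]
  ring

lemma wronskian_comp {f : Fin 3 → ℂ → ℂ} {φ : ℂ → ℂ} (hf : ∀ j, AnalyticAt ℂ (f j) (φ z))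
    (hφ : AnalyticAt ℂ φ z) :
    wronskian (fun j => f j ∘ φ) z = deriv φ z ^ 3 * wronskian f (φ z) := by
  have hderiv (j : Fin 3) := deriv_comp z (hf j).differentiableAt hφ.differentiableAt
  simp only [wronskian, det_fin_three, of_apply, Fin.val_zero, Fin.val_one, Fin.val_two,
    iteratedDeriv_zero, iteratedDeriv_one, hderiv, iteratedDeriv_two_comp (hf _) hφ,
    Function.comp_apply]
  ring

lemma wronskian_eq_prod_mul_det {f a : Fin 3 → ℂ → ℂ}
    (hf : ∀ j, ∀ᶠ w in 𝓝 z, HasDerivAt (f j) (a j w * f j w) w)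
    (ha : ∀ j, DifferentiableAt ℂ (a j) z) :
    wronskian f z = (∏ j, f j z) * !![1, 1, 1; a 0 z, a 1 z, a 2 z;
      deriv (a 0) z + a 0 z ^ 2, deriv (a 1) z + a 1 z ^ 2, deriv (a 2) z + a 2 z ^ 2].det := by
  have hderiv (j : Fin 3) : deriv (f j) z = a j z * f j z := (hf j).self_of_nhds.deriv
  have hderiv₂ (j : Fin 3) :
      iteratedDeriv 2 (f j) z = (deriv (a j) z + a j z ^ 2) * f j z := by
    have heq : deriv (f j) =ᶠ[𝓝 z] fun w => a j w * f j w := (hf j).mono fun w hw => hw.deriv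
    simp only [iteratedDeriv_succ, iteratedDeriv_zero]
    rw [heq.deriv_eq, deriv_fun_mul (ha j) (hf j).self_of_nhds.differentiableAt, hderiv]
    ring
  simp only [wronskian, det_fin_three, of_apply, Fin.val_zero, Fin.val_one, Fin.val_two,
    iteratedDeriv_zero, iteratedDeriv_one, hderiv, hderiv₂, Fin.prod_univ_three, cons_val]
  ring

end Wronskian

section Rigidity

open UpperHalfPlane ModularGroup Metric Function.Periodic
open scoped MatrixGroups

lemma apply_smul_eq_of_generators {α : Type*} {g : ℍ → α} (hS : ∀ τ, g (S • τ) = g τ)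
    (hT : ∀ τ, g (T • τ) = g τ) (γ : SL(2, ℤ)) (τ : ℍ) : g (γ • τ) = g τ := by
  have hγ : γ ∈ Subgroup.closure {S, T} := by simp [SpecialLinearGroup.SL2Z_generators]
  induction hγ using Subgroup.closure_induction generalizing τ with
  | mem γ hγ => rcases hγ with rfl | rfl; exacts [hS τ, hT τ]
  | one => rw [one_smul]
  | mul γ δ _ _ hγ hδ => rw [mul_smul, hγ, hδ]
  | inv γ _ hγ => rw [← hγ, smul_inv_smul]

lemma exists_one_half_le_im_norm_le {F : ℍ → ℂ} {d : ℂ} (hS : ∀ τ, F (S • τ) = d * F τ)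
    (hT : ∀ τ, F (T • τ) = F τ) (τ : ℍ) : ∃ ξ : ℍ, 1 / 2 ≤ ξ.im ∧ ‖F τ‖ ≤ ‖F ξ‖ := by
  obtain ⟨γ, hγ⟩ := exists_one_half_le_im_smul τ
  refine ⟨γ • τ, hγ, ?_⟩
  by_cases hF : ∀ ξ, F ξ = 0
  · rw [hF, norm_zero]
    exact norm_nonneg _
  · obtain ⟨ξ, hξ⟩ := not_forall.1 hF
    have hdd : d * d = 1 := by
      have hSS := hS (S • ξ)
      have hinv : S • S • ξ = ξ :=
        UpperHalfPlane.ext (by rw [modular_S_smul, modular_S_smul]; simp)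
      rw [hinv, hS, ← mul_assoc] at hSS
      exact (mul_eq_right₀ hξ).1 hSS.symm
    have hd : ‖d‖ = 1 := (pow_eq_one_iff_of_nonneg (norm_nonneg d) two_ne_zero).1 <| by
      rw [← norm_pow, sq, hdd, norm_one]
    refine (apply_smul_eq_of_generators (g := fun τ => ‖F τ‖) (fun τ => ?_) (fun τ => ?_) γ τ).ge
    · rw [hS, norm_mul, hd, one_mul]
    · rw [hT]

/-- Every orbit of the modular group meets a fixed compact subdisc of the `q`-disc, so `‖K‖`
attains its maximum. -/
theorem eqOn_const_of_modular_S {K : ℂ → ℂ} {d : ℂ} (hK : DifferentiableOn ℂ K (ball 0 1))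
    (hS : ∀ τ : ℂ, 0 < τ.im → K (qParam 1 (-1 / τ)) = d * K (qParam 1 τ)) :
    Set.EqOn K (Function.const ℂ (K 0)) (ball 0 1) := by
  refine Complex.eq_const_of_exists_le hK (Real.exp_nonneg (-Real.pi)) (by simp [Real.pi_pos])
    fun q hq => ?_
  rcases eq_or_ne q 0 with rfl | hq0
  · exact ⟨0, by simpa using Real.exp_nonneg _, le_rfl⟩
  · have hτ := im_invQParam_pos_of_norm_lt_one one_pos (mem_ball_zero_iff.1 hq) hq0
    have hT (τ : ℍ) : K (qParam 1 ↑(T • τ)) = K (qParam 1 τ) := by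
      rw [modular_T_smul]
      simp [qParam, mul_add, Complex.exp_add]
    have hS' (τ : ℍ) : K (qParam 1 ↑(S • τ)) = d * K (qParam 1 τ) := by
      rw [← hS τ τ.2, modular_S_smul, coe_mk, inv_neg, neg_div, one_div]
    obtain ⟨ξ, hξ, hle⟩ :=
      exists_one_half_le_im_norm_le (F := fun τ => K (qParam 1 τ)) hS' hT ⟨_, hτ⟩
    exact ⟨qParam 1 ξ, mem_closedBall_zero_iff.2 (norm_qParam_le_of_one_half_le_im hξ),
      by simpa only [qParam_right_inv one_ne_zero hq0] using hle⟩

end Rigidity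

section MinimalModelCharacters

open Complex Matrix Metric Filter Topology Function.Periodic
open scoped Real

/-- The residue condition `n ≢ 0, ±a` modulo `N`, for `0 < a < N`. -/
abbrev AvoidsResidues (N a n : ℕ) : Prop := n % N ≠ 0 ∧ n % N ≠ a ∧ n % N ≠ N - a

/-- The character of index `a` of the Virasoro minimal model `(2, N)`, as a quotient of a theta
series by the Dedekind eta function. -/
noncomputable def minimalModelChar (N a : ℕ) (τ : ℂ) : ℂ :=
  thetaSeries N (N - 2 * a) τ / thetaSeries 3 1 τ

/-- The series `A` in `q` with `q χ' = A χ`, where `χ` is the character `minimalModelChar N a` as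
a function of `q`. For `N = 7` and `a = 1, 2, 3` it is the series `A₁`, `A₂`, `A₃`. -/
noncomputable def charLogDeriv (N a : ℕ) (q : ℂ) : ℂ :=
  (N - 2 * a) ^ 2 / (8 * N) - 1 / 24 + lambertSum (AvoidsResidues N a) q

variable {N a : ℕ} {τ : ℂ}

lemma thetaSeries_three_one (hτ : 0 < τ.im) :
    thetaSeries 3 1 τ = cexp (π * I * τ / 12) * eulerProd (fun _ => True) (qParam 1 τ) := by
  have h := thetaSeries_eq_eulerProd (N := 3) one_pos (by norm_num) hτ
  rw [eulerProd_congr _ (fun _ => True) (by lia)] at h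
  norm_num at h
  exact h

lemma thetaSeries_three_one_ne_zero (hτ : 0 < τ.im) : thetaSeries 3 1 τ ≠ 0 := by
  rw [thetaSeries_three_one hτ]
  exact mul_ne_zero (Complex.exp_ne_zero _) (eulerProd_ne_zero _ (norm_qParam_lt_one one_pos hτ))

lemma minimalModelChar_eq (ha : 0 < a) (haN : 2 * a < N) (hτ : 0 < τ.im) :
    minimalModelChar N a τ =
      cexp (2 * π * I * ((N - 2 * a) ^ 2 / (8 * N) - 1 / 24) * τ) /
        eulerProd (AvoidsResidues N a) (qParam 1 τ) := by
  have hN : (N : ℂ) ≠ 0 := Nat.cast_ne_zero.2 (by lia)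
  have hq := norm_qParam_lt_one one_pos hτ
  have hE := eulerProd_ne_zero (AvoidsResidues N a) hq
  have hθ := eulerProd_ne_zero (fun n => n % N = 0 ∨ n % N = a ∨ n % N = N - a) hq
  have hexp : cexp (π * I * τ * (N - 2 * a) ^ 2 / (4 * N)) =
      cexp (2 * π * I * ((N - 2 * a) ^ 2 / (8 * N) - 1 / 24) * τ) * cexp (π * I * τ / 12) := by
    rw [← Complex.exp_add]
    congr 1
    field_simp
    ring
  rw [minimalModelChar, thetaSeries_eq_eulerProd ha haN hτ, thetaSeries_three_one hτ,
    ← eulerProd_mul_eulerProd (AvoidsResidues N a) (fun n => n % N = 0 ∨ n % N = a ∨ n % N = N - a)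
      (fun _ => True) (fun n => by tauto) (fun n => by tauto) hq, hexp]
  field_simp

lemma hasDerivAt_qParam_one (τ : ℂ) :
    HasDerivAt (qParam 1) (2 * π * I * qParam 1 τ) τ := by
  have h := ((hasDerivAt_id τ).const_mul (2 * π * I)).cexp
  refine (h.congr_deriv ?_).congr_of_eventuallyEq (.of_forall fun w => ?_) <;>
    simp [qParam, mul_comm]

lemma differentiableOn_charLogDeriv (N a : ℕ) :
    DifferentiableOn ℂ (charLogDeriv N a) (ball 0 1) :=
  (differentiableOn_lambertSum _).const_add _

lemma hasDerivAt_charLogDeriv_qParam (N a : ℕ) (hτ : 0 < τ.im) :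
    HasDerivAt (fun τ => charLogDeriv N a (qParam 1 τ))
      (2 * π * I * (qParam 1 τ * deriv (charLogDeriv N a) (qParam 1 τ))) τ := by
  have hA : DifferentiableAt ℂ (charLogDeriv N a) (qParam 1 τ) :=
    (differentiableOn_charLogDeriv N a).differentiableAt
      (isOpen_ball.mem_nhds (mem_ball_zero_iff.2 (norm_qParam_lt_one one_pos hτ)))
  refine (hA.hasDerivAt.comp τ (hasDerivAt_qParam_one τ)).congr_deriv ?_
  ring

lemma hasDerivAt_minimalModelChar (ha : 0 < a) (haN : 2 * a < N) (hτ : 0 < τ.im) :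
    HasDerivAt (minimalModelChar N a)
      (2 * π * I * charLogDeriv N a (qParam 1 τ) * minimalModelChar N a τ) τ := by
  have hq := norm_qParam_lt_one one_pos hτ
  have hE := eulerProd_ne_zero (AvoidsResidues N a) hq
  have hEd := ((differentiableOn_eulerProd (AvoidsResidues N a)).differentiableAt
    (isOpen_ball.mem_nhds (mem_ball_zero_iff.2 hq))).hasDerivAt
  have hlog := mul_logDeriv_eulerProd (AvoidsResidues N a) hq
  rw [logDeriv_apply, ← mul_div_assoc, div_eq_iff hE] at hlog
  have hexp := ((hasDerivAt_id τ).const_mul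
    (2 * π * I * (((N : ℂ) - 2 * a) ^ 2 / (8 * N) - 1 / 24))).cexp
  have hquot := hexp.div (hEd.comp τ (hasDerivAt_qParam_one τ)) hE
  refine (hquot.congr_deriv ?_).congr_of_eventuallyEq ?_
  · rw [minimalModelChar_eq ha haN hτ, charLogDeriv]
    simp only [Function.comp_apply, id]
    generalize ((N : ℂ) - 2 * a) ^ 2 / (8 * N) - 1 / 24 = e
    field_simp
    linear_combination -hlog
  · filter_upwards [UpperHalfPlane.isOpen_upperHalfPlaneSet.mem_nhds hτ] with w hw
    exact minimalModelChar_eq ha haN hw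

lemma analyticAt_minimalModelChar (ha : 0 < a) (haN : 2 * a < N) (hτ : 0 < τ.im) :
    AnalyticAt ℂ (minimalModelChar N a) τ :=
  DifferentiableOn.analyticAt (s := UpperHalfPlane.upperHalfPlaneSet)
    (fun _ hw => (hasDerivAt_minimalModelChar ha haN hw).differentiableAt.differentiableWithinAt)
    (UpperHalfPlane.isOpen_upperHalfPlaneSet.mem_nhds hτ)

/-- The determinant with rows `1`, `A` and `q A' + A ^ 2`, where `A` runs over the logarithmic
derivatives of the characters of the minimal model `(2, 7)`. -/
noncomputable def charLogDerivDet (q : ℂ) : ℂ :=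
  !![1, 1, 1;
    charLogDeriv 7 1 q, charLogDeriv 7 2 q, charLogDeriv 7 3 q;
    q * deriv (charLogDeriv 7 1) q + charLogDeriv 7 1 q ^ 2,
    q * deriv (charLogDeriv 7 2) q + charLogDeriv 7 2 q ^ 2,
    q * deriv (charLogDeriv 7 3) q + charLogDeriv 7 3 q ^ 2].det

lemma wronskian_minimalModelChar (hτ : 0 < τ.im) :
    wronskian (fun j : Fin 3 => minimalModelChar 7 (j + 1)) τ =
      (2 * π * I) ^ 3 * (∏ j : Fin 3, minimalModelChar 7 (j + 1) τ) *
        charLogDerivDet (qParam 1 τ) := by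
  have hA (a : ℕ) := (hasDerivAt_charLogDeriv_qParam 7 a hτ).const_mul (2 * π * I)
  have hdet := wronskian_eq_prod_mul_det
    (a := fun j w => 2 * π * I * charLogDeriv 7 (j + 1) (qParam 1 w))
    (f := fun j : Fin 3 => minimalModelChar 7 (j + 1)) (z := τ) (fun j => ?_)
    fun j => (hA (j + 1)).differentiableAt
  · simp only [(hA _).deriv, Fin.val_zero, Fin.val_one, Fin.val_two, zero_add] at hdet
    rw [hdet, charLogDerivDet]
    simp only [det_fin_three, cons_val, of_apply, one_add_one_eq_two, show 2 + 1 = 3 from rfl]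
    ring
  · filter_upwards [UpperHalfPlane.isOpen_upperHalfPlaneSet.mem_nhds hτ] with w hw
    exact hasDerivAt_minimalModelChar (Nat.succ_pos _) (by lia) hw

end MinimalModelCharacters

section ModularTransformation

open Complex Matrix Metric Filter Topology Function.Periodic
open scoped Real

variable {q τ : ℂ}

lemma im_neg_one_div_pos (hτ : 0 < τ.im) : 0 < (-1 / τ).im := by
  simpa only [inv_neg, neg_div, one_div] using UpperHalfPlane.im_inv_neg_coe_pos ⟨τ, hτ⟩

lemma exists_thetaSeries_three_neg_one_div : ∃ c : ℂ, ∀ τ : ℂ, 0 < τ.im →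
    thetaSeries 3 1 (-1 / τ) = 1 / (I / τ) ^ (1 / 2 : ℂ) * (c * thetaSeries 3 1 τ) := by
  refine ⟨1 / 3 ^ (1 / 2 : ℂ) * (cexp (-(π * I) / 6) + cexp (π * I / 6)), fun τ hτ => ?_⟩
  have hneg := thetaSeries_neg 3 1 τ
  have hself := thetaSeries_self 3 τ
  rw [thetaSeries_neg_one_div three_ne_zero odd_one hτ, Fin.sum_univ_three]
  norm_num at hneg hself ⊢
  rw [hneg, hself]
  ring_nf

lemma exists_thetaSeries_seven_neg_one_div {ρ : ℤ} (hρ : Odd ρ) : ∃ c : Fin 3 → ℂ, ∀ τ : ℂ,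
    0 < τ.im → thetaSeries 7 ρ (-1 / τ) =
      1 / (I / τ) ^ (1 / 2 : ℂ) * ∑ j : Fin 3, c j * thetaSeries 7 (7 - 2 * (j + 1 : ℕ)) τ := by
  let e (σ : ℤ) : ℂ := cexp (π * I * ρ * σ / (2 * 7))
  refine ⟨fun j => 1 / 7 ^ (1 / 2 : ℂ) * ![e 5 - e 9, e 3 - e 11, e (-1) + e 1] j, fun τ hτ => ?_⟩
  rw [thetaSeries_neg_one_div (by norm_num) hρ hτ, Fin.sum_univ_seven, Fin.sum_univ_three]
  have h₁ := thetaSeries_neg 7 1 τ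
  have h₇ := thetaSeries_self 7 τ
  have h₉ := thetaSeries_two_mul_sub 7 5 τ
  have h₁₁ := thetaSeries_two_mul_sub 7 3 τ
  simp only [e, cons_val]
  norm_num at h₁ h₇ h₉ h₁₁ ⊢
  rw [h₁, h₇, h₉, h₁₁]
  ring

lemma exists_minimalModelChar_seven_neg_one_div : ∃ S : Matrix (Fin 3) (Fin 3) ℂ, ∀ τ : ℂ,
    0 < τ.im → ∀ i : Fin 3, minimalModelChar 7 (i + 1) (-1 / τ) =
      ∑ j, S i j * minimalModelChar 7 (j + 1) τ := by
  have hodd (i : Fin 3) : Odd (7 - 2 * (i + 1 : ℕ) : ℤ) := ⟨3 - (i + 1 : ℕ), by ring⟩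
  choose s hs using fun i => exists_thetaSeries_seven_neg_one_div (hodd i)
  obtain ⟨c, hc⟩ := exists_thetaSeries_three_neg_one_div
  refine ⟨of fun i j => s i j / c, fun τ hτ i => ?_⟩
  have hτ0 : τ ≠ 0 := UpperHalfPlane.ne_zero ⟨τ, hτ⟩
  have hI : 1 / (I / τ) ^ (1 / 2 : ℂ) ≠ 0 :=
    one_div_ne_zero ((cpow_ne_zero_iff_of_exponent_ne_zero (by norm_num)).2
      (div_ne_zero I_ne_zero hτ0))
  simp only [minimalModelChar, of_apply]
  push_cast at hs ⊢
  rw [hs i τ hτ, hc τ hτ, mul_div_mul_left _ _ hI, Finset.sum_div]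
  exact Finset.sum_congr rfl fun j _ => mul_div_mul_comm _ _ _ _

lemma exists_wronskian_minimalModelChar_neg_one_div : ∃ d : ℂ, ∀ τ : ℂ, 0 < τ.im →
    wronskian (fun j : Fin 3 => minimalModelChar 7 (j + 1)) (-1 / τ) =
      d * τ ^ 6 * wronskian (fun j : Fin 3 => minimalModelChar 7 (j + 1)) τ := by
  obtain ⟨S, hS⟩ := exists_minimalModelChar_seven_neg_one_div
  refine ⟨S.det, fun τ hτ => ?_⟩
  have hτ0 : τ ≠ 0 := UpperHalfPlane.ne_zero ⟨τ, hτ⟩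
  have hana {w : ℂ} (hw : 0 < w.im) (j : Fin 3) : AnalyticAt ℂ (minimalModelChar 7 (j + 1)) w :=
    analyticAt_minimalModelChar (Nat.succ_pos _) (by lia) hw
  have hφ : HasDerivAt (fun w : ℂ => -1 / w) (1 / τ ^ 2) τ := by
    simpa [neg_div] using (hasDerivAt_inv hτ0).fun_neg
  have hφana : AnalyticAt ℂ (fun w : ℂ => -1 / w) τ := analyticAt_const.div analyticAt_id hτ0
  have hcomp := wronskian_comp (hana (im_neg_one_div_pos hτ)) hφana
  have hlin := wronskian_congr (z := τ)
    (f := fun j : Fin 3 => minimalModelChar 7 (j + 1) ∘ fun w => -1 / w)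
    (g := fun i w => ∑ j : Fin 3, S i j * minimalModelChar 7 (j + 1) w) fun j => by
      filter_upwards [UpperHalfPlane.isOpen_upperHalfPlaneSet.mem_nhds hτ] with w hw
      exact hS w hw j
  rw [hlin, wronskian_sum_mul S (hana hτ), hφ.deriv] at hcomp
  rw [mul_right_comm, hcomp]
  field_simp

lemma exists_thetaSeries_three_pow_twelve_neg_one_div : ∃ d : ℂ, ∀ τ : ℂ, 0 < τ.im →
    thetaSeries 3 1 (-1 / τ) ^ 12 = d * τ ^ 6 * thetaSeries 3 1 τ ^ 12 := by
  obtain ⟨c, hc⟩ := exists_thetaSeries_three_neg_one_div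
  refine ⟨-c ^ 12, fun τ hτ => ?_⟩
  have hI : ((I / τ) ^ (1 / 2 : ℂ)) ^ 12 = -(τ ^ 6)⁻¹ := by
    rw [← cpow_nat_mul, show ((12 : ℕ) : ℂ) * (1 / 2) = (6 : ℕ) by norm_num, cpow_natCast, div_pow,
      show 6 = 2 * 3 from rfl, pow_mul, I_sq]
    ring
  rw [hc τ hτ, mul_pow, div_pow, hI, mul_pow, one_pow, one_div, inv_neg, inv_inv]
  ring

lemma prod_minimalModelChar (hτ : 0 < τ.im) : ∏ j : Fin 3, minimalModelChar 7 (j + 1) τ =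
    thetaSeries 3 1 τ ^ 12 / ((∏ j : Fin 3, eulerProd (AvoidsResidues 7 (j + 1)) (qParam 1 τ)) *
      eulerProd (fun _ => True) (qParam 1 τ) ^ 12) := by
  have hφ := eulerProd_ne_zero (fun _ => True) (norm_qParam_lt_one one_pos hτ)
  have hχ (j : Fin 3) := minimalModelChar_eq (N := 7) (a := j + 1) (Nat.succ_pos _) (by lia) hτ
  simp only [hχ, Finset.prod_div_distrib, ← Complex.exp_sum]
  rw [thetaSeries_three_one hτ, mul_pow, mul_div_mul_right _ _ (pow_ne_zero 12 hφ),
    ← Complex.exp_nat_mul, Fin.sum_univ_three]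
  congr 2
  norm_num
  ring

/-- The quotient of the Wronskian of the characters of the minimal model `(2, 7)` by the twelfth
power of the Dedekind eta function, up to a constant, as a function of `q`. -/
noncomputable def wronskianQuotient (q : ℂ) : ℂ :=
  charLogDerivDet q / ((∏ j : Fin 3, eulerProd (AvoidsResidues 7 (j + 1)) q) *
    eulerProd (fun _ => True) q ^ 12)

lemma wronskianQuotient_qParam (hτ : 0 < τ.im) : wronskianQuotient (qParam 1 τ) =
    wronskian (fun j : Fin 3 => minimalModelChar 7 (j + 1)) τ /
      ((2 * π * I) ^ 3 * thetaSeries 3 1 τ ^ 12) := by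
  have hη := thetaSeries_three_one_ne_zero hτ
  rw [wronskian_minimalModelChar hτ, prod_minimalModelChar hτ, wronskianQuotient]
  field_simp [Complex.two_pi_I_ne_zero]

lemma exists_wronskianQuotient_neg_one_div : ∃ d : ℂ, ∀ τ : ℂ, 0 < τ.im →
    wronskianQuotient (qParam 1 (-1 / τ)) = d * wronskianQuotient (qParam 1 τ) := by
  obtain ⟨c, hc⟩ := exists_wronskian_minimalModelChar_neg_one_div
  obtain ⟨d, hd⟩ := exists_thetaSeries_three_pow_twelve_neg_one_div
  refine ⟨c / d, fun τ hτ => ?_⟩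
  have hτ0 : τ ≠ 0 := UpperHalfPlane.ne_zero ⟨τ, hτ⟩
  rw [wronskianQuotient_qParam (im_neg_one_div_pos hτ), wronskianQuotient_qParam hτ, hc τ hτ,
    hd τ hτ]
  field_simp

lemma differentiableOn_charLogDerivDet : DifferentiableOn ℂ charLogDerivDet (ball 0 1) := by
  have hA (a : ℕ) := differentiableOn_charLogDeriv 7 a
  have hA' (a : ℕ) := (hA a).deriv isOpen_ball
  unfold charLogDerivDet
  simp only [det_fin_three, of_apply, cons_val]
  fun_prop

lemma differentiableOn_wronskianQuotient : DifferentiableOn ℂ wronskianQuotient (ball 0 1) := by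
  have hE (P : ℕ → Prop) [DecidablePred P] (q : ℂ) (hq : q ∈ ball 0 1) : eulerProd P q ≠ 0 :=
    eulerProd_ne_zero P (mem_ball_zero_iff.1 hq)
  have hEd (P : ℕ → Prop) [DecidablePred P] := differentiableOn_eulerProd P
  refine differentiableOn_charLogDerivDet.div
    ((DifferentiableOn.fun_finsetProd fun _ _ => hEd _).mul ((hEd _).pow 12)) fun q hq => ?_
  exact mul_ne_zero (Finset.prod_ne_zero_iff.2 fun _ _ => hE _ q hq) (pow_ne_zero 12 (hE _ q hq))

lemma wronskianQuotient_zero : wronskianQuotient 0 = -(6 / 7 ^ 3) := by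
  simp only [wronskianQuotient, charLogDerivDet, charLogDeriv, lambertSum_zero, eulerProd_zero,
    det_fin_three, of_apply, cons_val]
  norm_num

theorem charLogDerivDet_eq (hq : ‖q‖ < 1) : charLogDerivDet q = -(6 / 7 ^ 3) *
    ((∏ j : Fin 3, eulerProd (AvoidsResidues 7 (j + 1)) q) * eulerProd (fun _ => True) q ^ 12) := by
  obtain ⟨d, hd⟩ := exists_wronskianQuotient_neg_one_div
  have hconst := eqOn_const_of_modular_S differentiableOn_wronskianQuotient hd
    (mem_ball_zero_iff.2 hq)
  rw [Function.const_apply, wronskianQuotient_zero, wronskianQuotient, div_eq_iff] at hconst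
  · exact hconst
  · exact mul_ne_zero (Finset.prod_ne_zero_iff.2 fun _ _ => eulerProd_ne_zero _ hq)
      (pow_ne_zero 12 (eulerProd_ne_zero _ hq))

end ModularTransformation

section ModulusSeven

open Matrix

variable {q : ℂ}

lemma prod_eulerProd_avoidsResidues_seven (hq : ‖q‖ < 1) :
    (∏ j : Fin 3, eulerProd (AvoidsResidues 7 (j + 1)) q) * eulerProd (fun n => n % 7 = 0) q ^ 2 =
      eulerProd (fun _ => True) q ^ 2 := by
  let C (a n : ℕ) : Prop := n % 7 = a ∨ n % 7 = 7 - a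
  have h₁ := eulerProd_mul_eulerProd (C 2) (C 3) (AvoidsResidues 7 1) (by grind) (by grind) hq
  have h₂ := eulerProd_mul_eulerProd (C 1) (C 3) (AvoidsResidues 7 2) (by grind) (by grind) hq
  have h₃ := eulerProd_mul_eulerProd (C 1) (C 2) (AvoidsResidues 7 3) (by grind) (by grind) hq
  have h₇ := eulerProd_mul_eulerProd (C 1) (AvoidsResidues 7 1) (fun n => n % 7 ≠ 0)
    (by grind) (by grind) hq
  have hφ := eulerProd_mul_eulerProd (fun n => n % 7 = 0) (fun n => n % 7 ≠ 0) (fun _ => True)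
    (by grind) (by grind) hq
  simp only [Fin.prod_univ_three, Fin.val_zero, Fin.val_one, Fin.val_two, zero_add,
    one_add_one_eq_two, show 2 + 1 = 3 from rfl]
  rw [← hφ, ← h₇, ← h₁, ← h₂, ← h₃]
  ring

lemma eulerProd_mod_eq_zero {N : ℕ} (hN : 0 < N) (q : ℂ) :
    eulerProd (fun n => n % N = 0) q = ∏' n : ℕ, (1 - (q ^ N) ^ (n + 1)) := by
  simpa only [Nat.mod_self, qPoch, ← pow_succ'] using (qPoch_pow_eq_eulerProd q hN le_rfl).symm

lemma det_add_det_eq_charLogDerivDet (q : ℂ) :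
    !![1, 1, 1;
      charLogDeriv 7 1 q, charLogDeriv 7 2 q, charLogDeriv 7 3 q;
      q * deriv (charLogDeriv 7 1) q, q * deriv (charLogDeriv 7 2) q,
      q * deriv (charLogDeriv 7 3) q].det +
    !![1, 1, 1;
      charLogDeriv 7 1 q, charLogDeriv 7 2 q, charLogDeriv 7 3 q;
      charLogDeriv 7 1 q ^ 2, charLogDeriv 7 2 q ^ 2, charLogDeriv 7 3 q ^ 2].det =
    charLogDerivDet q := by
  simp only [charLogDerivDet, det_fin_three, of_apply, cons_val]
  ring

lemma prod_eulerProd_mul_pow_twelve (hq : ‖q‖ < 1) :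
    (∏ j : Fin 3, eulerProd (AvoidsResidues 7 (j + 1)) q) * eulerProd (fun _ => True) q ^ 12 =
      ((∏' n : ℕ, (1 - q ^ (n + 1))) ^ 7 / ∏' n : ℕ, (1 - (q ^ 7) ^ (n + 1))) ^ 2 := by
  have hψ := eulerProd_ne_zero (fun n => n % 7 = 0) hq
  rw [← eulerProd_true, ← eulerProd_mod_eq_zero (by norm_num), div_pow,
    eq_div_iff (pow_ne_zero 2 hψ)]
  linear_combination eulerProd (fun _ => True) q ^ 12 * prod_eulerProd_avoidsResidues_seven hq

end ModulusSeven

/-- The modulus 7 determinantal identity (the `k = 3` case of the main theorem). -/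
theorem mod7_identity (A₁ A₂ A₃ : ℂ → ℂ)
    (hA₁ : A₁ = fun q : ℂ => 17 / 42 + ∑' n : ℕ,
      if (n + 1) % 7 = 2 ∨ (n + 1) % 7 = 3 ∨ (n + 1) % 7 = 4 ∨ (n + 1) % 7 = 5 then
        ((n : ℂ) + 1) * q ^ (n + 1) / (1 - q ^ (n + 1)) else 0)
    (hA₂ : A₂ = fun q : ℂ => 5 / 42 + ∑' n : ℕ,
      if (n + 1) % 7 = 1 ∨ (n + 1) % 7 = 3 ∨ (n + 1) % 7 = 4 ∨ (n + 1) % 7 = 6 then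
        ((n : ℂ) + 1) * q ^ (n + 1) / (1 - q ^ (n + 1)) else 0)
    (hA₃ : A₃ = fun q : ℂ => -(1 / 42) + ∑' n : ℕ,
      if (n + 1) % 7 = 1 ∨ (n + 1) % 7 = 2 ∨ (n + 1) % 7 = 5 ∨ (n + 1) % 7 = 6 then
        ((n : ℂ) + 1) * q ^ (n + 1) / (1 - q ^ (n + 1)) else 0)
    (D : (ℂ → ℂ) → (ℂ → ℂ)) (hD : D = fun F => fun q => q * deriv F q)
    (q : ℂ) (hq : ‖q‖ < 1) :
    Matrix.det !![(1 : ℂ), 1, 1; A₁ q, A₂ q, A₃ q; D A₁ q, D A₂ q, D A₃ q]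
      + Matrix.det !![(1 : ℂ), 1, 1; A₁ q, A₂ q, A₃ q; A₁ q ^ 2, A₂ q ^ 2, A₃ q ^ 2]
      = -(6 / 7 ^ 3) * ((∏' n : ℕ, (1 - q ^ (n + 1))) ^ 7
          / ∏' n : ℕ, (1 - (q ^ 7) ^ (n + 1))) ^ 2 := by
  obtain rfl : A₁ = charLogDeriv 7 1 := hA₁.trans <| funext fun q =>
    congrArg₂ (· + ·) (by norm_num) (tsum_congr fun n => if_congr (by lia) rfl rfl)
  obtain rfl : A₂ = charLogDeriv 7 2 := hA₂.trans <| funext fun q =>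
    congrArg₂ (· + ·) (by norm_num) (tsum_congr fun n => if_congr (by lia) rfl rfl)
  obtain rfl : A₃ = charLogDeriv 7 3 := hA₃.trans <| funext fun q =>
    congrArg₂ (· + ·) (by norm_num) (tsum_congr fun n => if_congr (by lia) rfl rfl)
  subst hD
  rw [← prod_eulerProd_mul_pow_twelve hq, ← charLogDerivDet_eq hq]
  exact det_add_det_eq_charLogDerivDet q
end

section
/- For k = 2, the general determinant identity reduces to Ramanujan's modulus 5 identity: with A₁(q) = 11/60 + ∑_{n≡±2 mod 5} nq^n/(1-q^n) and A₂(q) = -1/60 + ∑_{n≡±1 mod 5} nq^n/(1-q^n), one has A₂(q) - A₁(q) = (-1/5)·(q;q)_∞⁵/(q⁵;q⁵)_∞. -/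
open scoped BigOperators

/-!
Let `θ(a) = (a; q)_∞ (q / a; q)_∞` and `℘(a) = ∑_{n ∈ ℤ} a qⁿ / (1 - a qⁿ)²`. As in the theory of
the Weierstrass functions, Liouville's theorem on the torus `ℂˣ / q^ℤ` gives
`℘(a) - ℘(b) = -b (q; q)_∞⁴ θ(ab) θ(a/b) / (θ(a) θ(b))²`. Take `a = ζ`, `b = ζ²` with `ζ` a
primitive fifth root of unity. Then `θ(ab) θ(a/b)` is a monomial in `ζ` times `θ(a) θ(b)`, and the
product of `(q ζⁱ; q)_∞` over `i` is `(q⁵; q⁵)_∞`, so the right side is a multiple of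
`(q; q)_∞⁵ / (q⁵; q⁵)_∞`. On the left, expanding `℘` as a Lambert series produces the coefficients
`ζⁿ + ζ⁻ⁿ - ζ²ⁿ - ζ⁻²ⁿ`, which are the quadratic Gauss sum times the Legendre symbol `(n / 5)`.
-/

open Filter Topology
open scoped NumberTheorySymbols

section Development

variable {q : ℂ}

/-- The `q`-Pochhammer symbol `(a; q)_∞`. -/
noncomputable def qPochhammer (q a : ℂ) : ℂ := ∏' n : ℕ, (1 - a * q ^ n)

lemma summable_norm_neg_mul_pow (hq : ‖q‖ < 1) (a : ℂ) : Summable fun n : ℕ => ‖-(a * q ^ n)‖ := by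
  simp only [norm_neg, norm_mul, norm_pow]
  exact (summable_geometric_of_lt_one (norm_nonneg _) hq).mul_left _

lemma multipliable_one_sub_mul_pow (hq : ‖q‖ < 1) (a : ℂ) :
    Multipliable fun n : ℕ => 1 - a * q ^ n := by
  simpa only [sub_eq_add_neg] using
    multipliable_one_add_of_summable (summable_norm_neg_mul_pow hq a)

lemma qPochhammer_eq_one_sub_mul (hq : ‖q‖ < 1) (a : ℂ) :
    qPochhammer q a = (1 - a) * qPochhammer q (q * a) := by
  have hshift (n : ℕ) : 1 - a * q ^ (n + 1) = 1 - q * a * q ^ n := by ring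
  have hmul : Multipliable fun n : ℕ => 1 - a * q ^ (n + 1) := by
    simpa only [hshift] using multipliable_one_sub_mul_pow hq (q * a)
  have hsplit := tprod_eq_zero_mul' (f := fun n : ℕ => 1 - a * q ^ n) hmul
  rw [qPochhammer, hsplit, tprod_congr hshift, pow_zero, mul_one, qPochhammer]

lemma qPochhammer_ne_zero (hq : ‖q‖ < 1) {a : ℂ} (ha : ∀ n : ℕ, a * q ^ n ≠ 1) :
    qPochhammer q a ≠ 0 := by
  simpa only [qPochhammer, sub_eq_add_neg] using
    tprod_one_add_ne_zero_of_summable (f := fun n : ℕ => -(a * q ^ n))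
      (fun n => by simpa only [← sub_eq_add_neg, sub_ne_zero] using (ha n).symm)
      (summable_norm_neg_mul_pow hq a)

lemma norm_mul_pow_le (hq : ‖q‖ < 1) (x : ℂ) (n : ℕ) : ‖x * q ^ n‖ ≤ ‖x‖ := by
  rw [norm_mul, norm_pow]
  exact mul_le_of_le_one_right (norm_nonneg x) (pow_le_one₀ (norm_nonneg q) hq.le)

lemma qPochhammer_ne_zero_of_norm_lt_one (hq : ‖q‖ < 1) {a : ℂ} (ha : ‖a‖ < 1) :
    qPochhammer q a ≠ 0 := by
  refine qPochhammer_ne_zero hq fun n h => ?_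
  have := (norm_mul_pow_le hq a n).trans_lt ha
  rw [h, norm_one] at this
  exact this.false

lemma differentiable_qPochhammer (hq : ‖q‖ < 1) : Differentiable ℂ (qPochhammer q) := by
  intro a
  have hopen : IsOpen (Metric.ball (0 : ℂ) (‖a‖ + 1)) := Metric.isOpen_ball
  have hprod := Summable.hasProdLocallyUniformlyOn_nat_one_add
    (f := fun (n : ℕ) (x : ℂ) => -(x * q ^ n)) hopen
    ((summable_geometric_of_lt_one (norm_nonneg _) hq).mul_left (‖a‖ + 1))
    (Eventually.of_forall fun n x hx => by
      simp only [norm_neg, norm_mul, norm_pow]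
      gcongr
      exact (mem_ball_zero_iff.1 hx).le)
    (fun n => by fun_prop)
  have hdiff : DifferentiableOn ℂ (fun x : ℂ => ∏' n : ℕ, (1 + -(x * q ^ n)))
      (Metric.ball (0 : ℂ) (‖a‖ + 1)) :=
    hprod.differentiableOn (Eventually.of_forall fun s => by fun_prop) hopen
  simpa only [← sub_eq_add_neg] using! hdiff.differentiableAt (hopen.mem_nhds (by simp))

lemma prod_qPochhammer_mul_root {ζ : ℂ} {n : ℕ} (hq : ‖q‖ < 1) (hn : 0 < n)
    (hζ : IsPrimitiveRoot ζ n) (a : ℂ) :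
    ∏ i ∈ Finset.range n, qPochhammer q (ζ ^ i * a) = qPochhammer (q ^ n) (a ^ n) := by
  have hfactor (x : ℂ) : ∏ i ∈ Finset.range n, (1 - ζ ^ i * x) = 1 - x ^ n := by
    have hroots := hζ.pow_sub_pow_eq_prod_sub_mul 1 x hn
    rw [one_pow, Finset.prod, Polynomial.nthRootsFinset_def, Multiset.toFinset_val,
      hζ.nthRoots_one_nodup.dedup, hζ.nthRoots_eq (one_pow n), Multiset.map_map] at hroots
    simpa [Finset.prod] using hroots.symm
  unfold qPochhammer
  rw [← Multipliable.tprod_finsetProd fun i _ => multipliable_one_sub_mul_pow hq _]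
  refine tprod_congr fun k => ?_
  simp only [mul_assoc]
  rw [hfactor, mul_pow, pow_right_comm]

/-- The multiplicative theta function `(a; q)_∞ (q / a; q)_∞`. -/
noncomputable def qTheta (q a : ℂ) : ℂ := qPochhammer q a * qPochhammer q (q / a)

lemma qTheta_eq_one_sub_mul (hq : ‖q‖ < 1) (a : ℂ) :
    qTheta q a = (1 - a) * (qPochhammer q (q * a) * qPochhammer q (q / a)) := by
  rw [qTheta, qPochhammer_eq_one_sub_mul hq a, mul_assoc]

lemma qTheta_one (hq : ‖q‖ < 1) : qTheta q 1 = 0 := by simp [qTheta_eq_one_sub_mul hq]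

lemma qTheta_inv (hq : ‖q‖ < 1) {a : ℂ} (ha : a ≠ 0) : qTheta q a⁻¹ = -a⁻¹ * qTheta q a := by
  rw [qTheta_eq_one_sub_mul hq, qTheta_eq_one_sub_mul hq a, div_inv_eq_mul, ← div_eq_mul_inv]
  field_simp
  ring

lemma qTheta_mul_left (hq : ‖q‖ < 1) (hq0 : q ≠ 0) {a : ℂ} (ha : a ≠ 0) :
    qTheta q (q * a) = -a⁻¹ * qTheta q a := by
  rw [← qTheta_inv hq ha, qTheta, qTheta, div_inv_eq_mul, mul_comm, div_mul_cancel_left₀ hq0]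

lemma qTheta_ne_zero (hq : ‖q‖ < 1) {a : ℂ} (ha0 : a ≠ 0) (ha : ∀ n : ℤ, a ≠ q ^ n) :
    qTheta q a ≠ 0 := by
  refine mul_ne_zero (qPochhammer_ne_zero hq fun n h => ha (-n) ?_)
    (qPochhammer_ne_zero hq fun n h => ha (n + 1) ?_)
  · rw [zpow_neg, zpow_natCast]
    exact eq_inv_of_mul_eq_one_left h
  · rw [div_mul_eq_mul_div, div_eq_one_iff_eq ha0, ← pow_succ'] at h
    exact_mod_cast h.symm

lemma differentiableAt_qTheta (hq : ‖q‖ < 1) {a : ℂ} (ha : a ≠ 0) :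
    DifferentiableAt ℂ (qTheta q) a := by
  have := differentiable_qPochhammer hq
  unfold qTheta
  fun_prop (disch := assumption)

/-- The Koebe function `x / (1 - x)²`, with the junk value `0` at its pole `1`. -/
noncomputable def koebe (x : ℂ) : ℂ := x / (1 - x) ^ 2

lemma koebe_inv (x : ℂ) : koebe x⁻¹ = koebe x := by
  unfold koebe
  rcases eq_or_ne x 0 with rfl | hx
  · simp
  rw [show 1 - x⁻¹ = -(1 - x) / x by field_simp; ring, div_pow, neg_sq, div_div_eq_mul_div]
  congr 1
  field_simp

lemma norm_koebe_le {x : ℂ} {r : ℝ} (hr : r < 1) (hx : ‖x‖ ≤ r) :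
    ‖koebe x‖ ≤ ‖x‖ / (1 - r) ^ 2 := by
  have hdist : 1 - r ≤ ‖1 - x‖ := by
    have := norm_sub_norm_le (1 : ℂ) x
    rw [norm_one] at this
    linarith
  have : 0 < 1 - r := by linarith
  rw [koebe, norm_div, norm_pow]
  gcongr

lemma hasSum_koebe {x : ℂ} (hx : ‖x‖ < 1) : HasSum (fun m : ℕ => (m : ℂ) * x ^ m) (koebe x) :=
  hasSum_coe_mul_geometric_of_norm_lt_one hx

lemma differentiableAt_koebe {x : ℂ} (hx : x ≠ 1) : DifferentiableAt ℂ koebe x := by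
  have : (1 - x) ^ 2 ≠ 0 := pow_ne_zero 2 (sub_ne_zero.2 hx.symm)
  unfold koebe
  fun_prop (disch := assumption)

/-- The sum of the Koebe function over the half-orbit `x, xq, xq², …`. -/
noncomputable def koebeSum (q x : ℂ) : ℂ := ∑' n : ℕ, koebe (x * q ^ n)

lemma norm_koebe_mul_pow_le {x : ℂ} {r : ℝ} (hq : ‖q‖ < 1) (hr : r < 1) (hx : ‖x‖ ≤ r) (n : ℕ) :
    ‖koebe (x * q ^ n)‖ ≤ r / (1 - r) ^ 2 * ‖q‖ ^ n := by
  refine (norm_koebe_le hr ((norm_mul_pow_le hq x n).trans hx)).trans ?_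
  rw [norm_mul, norm_pow, div_mul_eq_mul_div]
  gcongr

lemma hasSum_koebeSum {x : ℂ} (hq : ‖q‖ < 1) (hx : ‖x‖ < 1) :
    HasSum (fun n : ℕ => koebe (x * q ^ n)) (koebeSum q x) :=
  (Summable.of_norm_bounded ((summable_geometric_of_lt_one (norm_nonneg _) hq).mul_left _)
    (norm_koebe_mul_pow_le hq hx le_rfl)).hasSum

lemma differentiableOn_koebeSum (hq : ‖q‖ < 1) :
    DifferentiableOn ℂ (koebeSum q) (Metric.ball 0 1) := by
  intro x hx
  obtain ⟨r, hxr, hr⟩ := exists_between (mem_ball_zero_iff.1 hx)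
  refine (DifferentiableOn.differentiableAt (s := Metric.ball 0 r) ?_
    (Metric.isOpen_ball.mem_nhds (mem_ball_zero_iff.2 hxr))).differentiableWithinAt
  refine Complex.differentiableOn_tsum_of_summable_norm
    ((summable_geometric_of_lt_one (norm_nonneg _) hq).mul_left (r / (1 - r) ^ 2))
    (fun n y hy => ?_) Metric.isOpen_ball
    (fun n y hy => norm_koebe_mul_pow_le hq hr (mem_ball_zero_iff.1 hy).le n)
  have hne : y * q ^ n ≠ 1 := fun h => by
    have := ((norm_mul_pow_le hq y n).trans_lt (mem_ball_zero_iff.1 hy)).trans hr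
    rw [h, norm_one] at this
    exact this.false
  exact (DifferentiableAt.comp y (differentiableAt_koebe hne)
    (by fun_prop)).differentiableWithinAt

lemma summable_mul_mul_pow_pow {x : ℂ} (hq : ‖q‖ < 1) (hx : ‖x‖ < 1) :
    Summable fun p : ℕ × ℕ => (p.1 : ℂ) * (x * q ^ p.2) ^ p.1 := by
  have hbound : Summable fun p : ℕ × ℕ => ((p.1 : ℝ) * ‖x‖ ^ p.1) * ‖q‖ ^ p.2 :=
    Summable.mul_of_nonneg (f := fun m : ℕ => (m : ℝ) * ‖x‖ ^ m) (g := fun n : ℕ => ‖q‖ ^ n)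
      (hasSum_coe_mul_geometric_of_norm_lt_one (by simpa using hx)).summable
      (summable_geometric_of_lt_one (norm_nonneg _) hq)
      (fun m => by positivity) (fun n => by positivity)
  refine Summable.of_norm_bounded hbound fun ⟨m, n⟩ => ?_
  rcases Nat.eq_zero_or_pos m with rfl | hm
  · simp
  · simp only [norm_mul, norm_pow, Complex.norm_natCast, mul_pow, ← pow_mul, mul_assoc]
    gcongr _ * (_ * ?_)
    exact pow_le_pow_of_le_one (norm_nonneg _) hq.le (Nat.le_mul_of_pos_right n hm)

lemma hasSum_geometric_mul_pow {x : ℂ} (hq : ‖q‖ < 1) (m : ℕ) :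
    HasSum (fun n : ℕ => (m : ℂ) * (x * q ^ n) ^ m) (m * x ^ m / (1 - q ^ m)) := by
  rcases Nat.eq_zero_or_pos m with rfl | hm
  · simp [hasSum_zero]
  · have hqm : ‖q ^ m‖ < 1 := by
      rw [norm_pow]
      exact pow_lt_one₀ (norm_nonneg _) hq hm.ne'
    refine ((hasSum_geometric_of_norm_lt_one hqm).mul_left (m * x ^ m)).congr_fun fun n => ?_
    rw [mul_pow, pow_right_comm, mul_assoc]

lemma hasSum_comm_of_summable {α β γ : Type*} [AddCommMonoid α] [TopologicalSpace α]
    [ContinuousAdd α] [T3Space α] {F : β → γ → α} {r : β → α} {c : γ → α} {s : α}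
    (hF : Summable fun p : β × γ => F p.1 p.2) (hr : ∀ b, HasSum (F b) (r b))
    (hc : ∀ g, HasSum (fun b => F b g) (c g)) (hs : HasSum c s) : HasSum r s := by
  have hcols : HasSum c (∑' p : β × γ, F p.1 p.2) :=
    HasSum.prod_fiberwise ((Equiv.prodComm γ β).hasSum_iff.2 hF.hasSum) hc
  rw [hs.unique hcols]
  exact hF.hasSum.prod_fiberwise hr

-- Expand each `koebe (x qⁿ)` as `∑ m (x qⁿ)ᵐ` and interchange the two summations.
lemma hasSum_lambert_koebeSum {x : ℂ} (hq : ‖q‖ < 1) (hx : ‖x‖ < 1) :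
    HasSum (fun m : ℕ => (m : ℂ) * x ^ m / (1 - q ^ m)) (koebeSum q x) :=
  hasSum_comm_of_summable (F := fun m n : ℕ => (m : ℂ) * (x * q ^ n) ^ m)
    (summable_mul_mul_pow_pow hq hx) (hasSum_geometric_mul_pow hq)
    (fun n => hasSum_koebe ((norm_mul_pow_le hq x n).trans_lt hx)) (hasSum_koebeSum hq hx)

/-- The open annulus `‖q‖ < ‖x‖ < ‖q‖⁻¹`. For `0 < ‖q‖ < 1` it contains the fundamental domain
`‖q‖ < ‖x‖ ≤ 1` of `ℂˣ / q^ℤ`, and `1` is the only power of `q` in it. -/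
def qAnnulus (q : ℂ) : Set ℂ := {x | ‖q‖ < ‖x‖ ∧ ‖q * x‖ < 1}

lemma isOpen_qAnnulus (q : ℂ) : IsOpen (qAnnulus q) :=
  (isOpen_lt continuous_const continuous_norm).inter
    (isOpen_lt (continuous_const_mul q).norm continuous_const)

lemma mem_qAnnulus_of_norm_eq_one (hq : ‖q‖ < 1) {x : ℂ} (hx : ‖x‖ = 1) : x ∈ qAnnulus q := by
  simp [qAnnulus, hx, hq]

lemma qAnnulus_mem_nhds_one (hq : ‖q‖ < 1) : qAnnulus q ∈ 𝓝 (1 : ℂ) :=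
  (isOpen_qAnnulus q).mem_nhds (mem_qAnnulus_of_norm_eq_one hq norm_one)

lemma ne_zero_of_mem_qAnnulus {x : ℂ} (hx : x ∈ qAnnulus q) : x ≠ 0 :=
  norm_pos_iff.1 ((norm_nonneg q).trans_lt hx.1)

lemma norm_div_lt_one_of_mem_qAnnulus {x : ℂ} (hx : x ∈ qAnnulus q) : ‖q / x‖ < 1 := by
  rw [norm_div, div_lt_one (norm_pos_iff.2 (ne_zero_of_mem_qAnnulus hx))]
  exact hx.1

lemma zpow_mem_qAnnulus_iff (hq0 : q ≠ 0) (hq : ‖q‖ < 1) {n : ℤ} :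
    q ^ n ∈ qAnnulus q ↔ n = 0 := by
  have hqn : 0 < ‖q‖ := norm_pos_iff.2 hq0
  have hlt : ‖q‖ < ‖q ^ n‖ ↔ n < 1 := by
    simpa using zpow_lt_zpow_iff_right_of_lt_one₀ hqn hq (m := 1) (n := n)
  have hlt' : ‖q * q ^ n‖ < 1 ↔ 0 < 1 + n := by
    rw [← zpow_one_add₀ hq0, norm_zpow, zpow_lt_one_iff_right_of_lt_one₀ hqn hq]
  rw [qAnnulus, Set.mem_ofPred_eq, hlt, hlt']
  omega

lemma ne_zpow_of_mem_qAnnulus (hq0 : q ≠ 0) (hq : ‖q‖ < 1) {x : ℂ} (hx : x ∈ qAnnulus q)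
    (hx1 : x ≠ 1) (n : ℤ) : x ≠ q ^ n := by
  rintro rfl
  rw [(zpow_mem_qAnnulus_iff hq0 hq).1 hx, zpow_zero] at hx1
  exact hx1 rfl

lemma exists_zpow_mul_mem_fundamentalDomain (hq0 : q ≠ 0) (hq : ‖q‖ < 1) {x : ℂ} (hx : x ≠ 0) :
    ∃ n : ℤ, ‖q‖ < ‖q ^ n * x‖ ∧ ‖q ^ n * x‖ ≤ 1 := by
  have hqn : 0 < ‖q‖ := norm_pos_iff.2 hq0
  obtain ⟨n, hlow, hup⟩ := exists_mem_Ioc_zpow (norm_pos_iff.2 hx) ((one_lt_inv₀ hqn).2 hq)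
  have hpos : 0 < ‖q‖ ^ n := zpow_pos hqn n
  rw [inv_zpow, inv_lt_iff_one_lt_mul₀ hpos] at hlow
  rw [inv_zpow, ← one_div, le_div_iff₀ (zpow_pos hqn _), zpow_add_one₀ hqn.ne'] at hup
  refine ⟨n + 1, ?_, ?_⟩ <;> rw [norm_mul, norm_zpow, zpow_add_one₀ hqn.ne']
  · nlinarith
  · linarith

lemma apply_zpow_mul_of_apply_mul {α : Type*} {f : ℂ → α} (hq0 : q ≠ 0)
    (hf : ∀ x ≠ 0, f (q * x) = f x) (n : ℤ) {x : ℂ} (hx : x ≠ 0) : f (q ^ n * x) = f x := by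
  induction n with
  | zero => simp
  | succ n ih =>
    rw [zpow_add_one₀ hq0, mul_right_comm, mul_comm, hf _ (mul_ne_zero (zpow_ne_zero _ hq0) hx), ih]
  | pred n ih =>
    rw [← hf _ (mul_ne_zero (zpow_ne_zero _ hq0) hx), ← mul_assoc, ← zpow_one_add₀ hq0,
      add_sub_cancel, ih]

lemma differentiableAt_of_apply_mul {f : ℂ → ℂ} (hq0 : q ≠ 0) (hq : ‖q‖ < 1)
    (hf : ∀ x ≠ 0, f (q * x) = f x) (hd : DifferentiableOn ℂ f (qAnnulus q)) {x : ℂ}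
    (hx : x ≠ 0) : DifferentiableAt ℂ f x := by
  obtain ⟨n, hlow, hup⟩ := exists_zpow_mul_mem_fundamentalDomain hq0 hq hx
  have hmem : q ^ n * x ∈ qAnnulus q := by
    refine ⟨hlow, ?_⟩
    rw [norm_mul]
    exact mul_lt_one_of_nonneg_of_lt_one_left (norm_nonneg q) hq hup
  have hcomp : DifferentiableAt ℂ (fun y => f (q ^ n * y)) x :=
    DifferentiableAt.comp x (hd.differentiableAt ((isOpen_qAnnulus q).mem_nhds hmem))
      (by fun_prop)
  refine hcomp.congr_of_eventuallyEq ?_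
  filter_upwards [isOpen_ne.mem_nhds hx] with y hy
  exact (apply_zpow_mul_of_apply_mul hq0 hf n hy).symm

-- `z ↦ f (exp z)` is entire, and bounded because its values are already taken on a compact annulus.
theorem eq_of_apply_mul {f : ℂ → ℂ} (hq0 : q ≠ 0) (hq : ‖q‖ < 1)
    (hf : ∀ x ≠ 0, f (q * x) = f x) (hd : DifferentiableOn ℂ f (qAnnulus q)) {a b : ℂ}
    (ha : a ≠ 0) (hb : b ≠ 0) : f a = f b := by
  have hdiff {x : ℂ} : x ≠ 0 → DifferentiableAt ℂ f x :=
    differentiableAt_of_apply_mul hq0 hq hf hd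
  have hentire : Differentiable ℂ fun z => f (Complex.exp z) := fun z =>
    DifferentiableAt.comp z (hdiff (Complex.exp_ne_zero z)) (by fun_prop)
  have hbounded : Bornology.IsBounded (Set.range fun z => f (Complex.exp z)) := by
    have hcompact : IsCompact (Metric.closedBall (0 : ℂ) 1 ∩ {x : ℂ | ‖q‖ ≤ ‖x‖}) :=
      (isCompact_closedBall 0 1).inter_right (isClosed_le continuous_const continuous_norm)
    have hcont : ContinuousOn f (Metric.closedBall (0 : ℂ) 1 ∩ {x : ℂ | ‖q‖ ≤ ‖x‖}) := fun x hx =>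
      (hdiff (norm_pos_iff.1 ((norm_pos_iff.2 hq0).trans_le hx.2))).continuousAt.continuousWithinAt
    refine (hcompact.image_of_continuousOn hcont).isBounded.subset ?_
    rintro _ ⟨z, rfl⟩
    obtain ⟨n, hlow, hup⟩ := exists_zpow_mul_mem_fundamentalDomain hq0 hq (Complex.exp_ne_zero z)
    exact ⟨_, ⟨mem_closedBall_zero_iff.2 hup, hlow.le⟩,
      apply_zpow_mul_of_apply_mul hq0 hf n (Complex.exp_ne_zero z)⟩
  simpa only [Complex.exp_log ha, Complex.exp_log hb] using
    hentire.apply_eq_apply_of_bounded hbounded (Complex.log a) (Complex.log b)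

lemma differentiableOn_update_limUnder_of_tendsto_sub_mul {f : ℂ → ℂ} {s : Set ℂ} {c : ℂ}
    (hs : s ∈ 𝓝 c) (hd : DifferentiableOn ℂ f (s \ {c}))
    (hlim : Tendsto (fun x => (x - c) * f x) (𝓝[≠] c) (𝓝 0)) :
    DifferentiableOn ℂ (Function.update f c (limUnder (𝓝[≠] c) f)) s := by
  refine Complex.differentiableOn_update_limUnder_of_isLittleO hs hd ?_
  have hconst : Tendsto (fun x => (x - c) * f c) (𝓝[≠] c) (𝓝 0) := by
    have : ContinuousAt (fun x => (x - c) * f c) c := by fun_prop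
    simpa using this.tendsto.mono_left nhdsWithin_le_nhds
  rw [Asymptotics.isLittleO_iff_tendsto' (by
    filter_upwards [self_mem_nhdsWithin] with x hx h
    exact absurd (inv_eq_zero.1 h) (sub_ne_zero.2 hx))]
  simpa only [div_inv_eq_mul, mul_comm (_ - f c), mul_sub, sub_zero] using hlim.sub hconst

theorem eq_of_apply_mul_of_tendsto {f : ℂ → ℂ} (hq0 : q ≠ 0) (hq : ‖q‖ < 1)
    (hf : ∀ x ≠ 0, f (q * x) = f x) (hd : DifferentiableOn ℂ f (qAnnulus q \ {1}))
    (hlim : Tendsto (fun x => (x - 1) * f x) (𝓝[≠] 1) (𝓝 0)) {a b : ℂ}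
    (ha0 : a ≠ 0) (ha : ∀ n : ℤ, a ≠ q ^ n) (hb0 : b ≠ 0) (hb : ∀ n : ℤ, b ≠ q ^ n) :
    f a = f b := by
  classical
  set L := limUnder (𝓝[≠] 1) f
  set g : ℂ → ℂ := fun x => if ∃ n : ℤ, x = q ^ n then L else f x with hg
  have hgper : ∀ x ≠ 0, g (q * x) = g x := by
    intro x hx
    have hiff : (∃ n : ℤ, q * x = q ^ n) ↔ ∃ n : ℤ, x = q ^ n := by
      refine ⟨fun ⟨n, hn⟩ => ⟨n - 1, ?_⟩, fun ⟨n, hn⟩ => ⟨1 + n, ?_⟩⟩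
      · rw [zpow_sub_one₀ hq0, ← hn, mul_comm q, mul_inv_cancel_right₀ hq0]
      · rw [zpow_one_add₀ hq0, hn]
    simp only [hg, hiff, hf x hx]
  have hgupdate : Set.EqOn g (Function.update f 1 L) (qAnnulus q) := by
    intro x hx
    rcases eq_or_ne x 1 with rfl | hx1
    · rw [Function.update_self]
      exact if_pos ⟨0, (zpow_zero q).symm⟩
    · rw [Function.update_of_ne hx1]
      exact if_neg (not_exists.2 (ne_zpow_of_mem_qAnnulus hq0 hq hx hx1))
  have hgd : DifferentiableOn ℂ g (qAnnulus q) :=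
    (differentiableOn_update_limUnder_of_tendsto_sub_mul (qAnnulus_mem_nhds_one hq) hd hlim).congr
      hgupdate
  simpa only [hg, not_exists.2 ha, not_exists.2 hb, if_false] using
    eq_of_apply_mul hq0 hq hgper hgd ha0 hb0

-- The residue at the would-be simple pole `1` changes sign under `x ↦ x⁻¹`.
lemma tendsto_sub_one_mul_of_apply_inv {f K : ℂ → ℂ} (hf : ∀ x ≠ 0, f x⁻¹ = f x)
    (hK : DifferentiableAt ℂ K 1) (hK1 : K 1 = 0)
    (hfK : ∀ᶠ x in 𝓝[≠] 1, (x - 1) ^ 2 * f x = K x) :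
    Tendsto (fun x => (x - 1) * f x) (𝓝[≠] 1) (𝓝 0) := by
  have hres : Tendsto (fun x => (x - 1) * f x) (𝓝[≠] 1) (𝓝 (deriv K 1)) := by
    refine (hasDerivAt_iff_tendsto_slope.1 hK.hasDerivAt).congr' ?_
    filter_upwards [hfK, self_mem_nhdsWithin] with x hx hx1
    have : x - 1 ≠ 0 := sub_ne_zero.2 hx1
    rw [slope_def_field, hK1, sub_zero, ← hx]
    field_simp
  have hinv : Tendsto (fun x : ℂ => x⁻¹) (𝓝[≠] 1) (𝓝 1) := by
    simpa using (continuousAt_inv₀ (one_ne_zero' ℂ)).tendsto.mono_left nhdsWithin_le_nhds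
  have hinv' : Tendsto (fun x : ℂ => x⁻¹) (𝓝[≠] 1) (𝓝[≠] 1) := by
    refine tendsto_nhdsWithin_iff.2 ⟨hinv, ?_⟩
    filter_upwards [self_mem_nhdsWithin] with x hx
    simpa using hx
  have hneg : Tendsto (fun x => (x - 1) * f x) (𝓝[≠] 1) (𝓝 (-deriv K 1)) := by
    have hmul := (tendsto_nhdsWithin_of_tendsto_nhds tendsto_id).neg.mul (hres.comp hinv')
    rw [neg_one_mul] at hmul
    refine hmul.congr' ?_
    filter_upwards [nhdsWithin_le_nhds (isOpen_ne.mem_nhds (one_ne_zero' ℂ))] with x hx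
    have : x ≠ 0 := hx
    simp only [Function.comp_apply, hf x this, id]
    field_simp
    ring
  have hzero : deriv K 1 = 0 := by
    linear_combination (1 / 2 : ℂ) * tendsto_nhds_unique hres hneg
  rwa [hzero] at hres

/-- The multiplicative Weierstrass function `∑_{n ∈ ℤ} a qⁿ / (1 - a qⁿ)²` of the torus `ℂˣ / q^ℤ`.
With `a = exp u` it is the usual `℘(u)` up to an additive constant. -/
noncomputable def qWeierstrass (q a : ℂ) : ℂ := ∑' n : ℤ, koebe (a * q ^ n)

lemma qWeierstrass_mul_left (hq0 : q ≠ 0) (a : ℂ) :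
    qWeierstrass q (q * a) = qWeierstrass q a := by
  rw [qWeierstrass, qWeierstrass,
    ← (Equiv.addRight (1 : ℤ)).tsum_eq fun n : ℤ => koebe (a * q ^ n)]
  refine tsum_congr fun n => ?_
  rw [Equiv.coe_addRight, zpow_add_one₀ hq0, mul_comm q a, mul_assoc, mul_comm q]

lemma qWeierstrass_inv (q a : ℂ) : qWeierstrass q a⁻¹ = qWeierstrass q a := by
  rw [qWeierstrass, qWeierstrass, ← (Equiv.neg ℤ).tsum_eq fun n : ℤ => koebe (a * q ^ n)]
  refine tsum_congr fun n => ?_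
  rw [← koebe_inv, Equiv.neg_apply, mul_inv, inv_inv, zpow_neg]

lemma qWeierstrass_eq_koebe_add (hq : ‖q‖ < 1) {a : ℂ} (ha : a ∈ qAnnulus q) :
    qWeierstrass q a = koebe a + (koebeSum q (q * a) + koebeSum q (q / a)) := by
  have hpos (n : ℕ) : koebe (a * q ^ ((n : ℤ) + 1)) = koebe (q * a * q ^ n) := by
    congr 1
    norm_cast
    ring
  have hneg (n : ℕ) : koebe (a * q ^ (-((n : ℤ) + 1))) = koebe (q / a * q ^ n) := by
    rw [← koebe_inv, mul_inv, ← zpow_neg, neg_neg]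
    congr 1
    norm_cast
    ring
  have hsum := HasSum.of_add_one_of_neg_add_one (f := fun n : ℤ => koebe (a * q ^ n))
    ((hasSum_koebeSum hq ha.2).congr_fun hpos)
    ((hasSum_koebeSum hq (norm_div_lt_one_of_mem_qAnnulus ha)).congr_fun hneg)
  rw [qWeierstrass, hsum.tsum_eq, zpow_zero, mul_one]
  ring

lemma differentiableOn_koebeSum_add (hq : ‖q‖ < 1) :
    DifferentiableOn ℂ (fun x => koebeSum q (q * x) + koebeSum q (q / x)) (qAnnulus q) := by
  have hdiv : DifferentiableOn ℂ (fun x => q / x) (qAnnulus q) :=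
    (differentiableOn_const q).div differentiableOn_id fun _ => ne_zero_of_mem_qAnnulus
  refine ((differentiableOn_koebeSum hq).comp (by fun_prop) fun x hx => ?_).add
    ((differentiableOn_koebeSum hq).comp hdiv fun x hx => ?_)
  · exact mem_ball_zero_iff.2 hx.2
  · exact mem_ball_zero_iff.2 (norm_div_lt_one_of_mem_qAnnulus hx)

lemma differentiableOn_qWeierstrass (hq : ‖q‖ < 1) :
    DifferentiableOn ℂ (qWeierstrass q) (qAnnulus q \ {1}) :=
  (DifferentiableOn.add (fun _ hx => (differentiableAt_koebe hx.2).differentiableWithinAt)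
    ((differentiableOn_koebeSum_add hq).mono Set.sdiff_subset)).congr
      fun _ hx => qWeierstrass_eq_koebe_add hq hx.1

/-- The multiplicative analogue of `-σ(u + v) σ(u - v) / (σ(u) σ(v))²`, with `qTheta` in place of
`σ` and normalized so that its double pole at `a = 1` has leading coefficient `1`. -/
noncomputable def sigmaQuotient (q a b : ℂ) : ℂ :=
  -b * qPochhammer q q ^ 4 * (qTheta q (a * b) * qTheta q (a / b)) / (qTheta q a * qTheta q b) ^ 2

lemma sigmaQuotient_self (hq : ‖q‖ < 1) {a : ℂ} (ha : a ≠ 0) : sigmaQuotient q a a = 0 := by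
  simp [sigmaQuotient, div_self ha, qTheta_one hq]

lemma sigmaQuotient_mul_left (hq : ‖q‖ < 1) (hq0 : q ≠ 0) {a b : ℂ} (ha : a ≠ 0) (hb : b ≠ 0) :
    sigmaQuotient q (q * a) b = sigmaQuotient q a b := by
  rw [sigmaQuotient, sigmaQuotient, mul_assoc q, mul_div_assoc q, qTheta_mul_left hq hq0 ha,
    qTheta_mul_left hq hq0 (mul_ne_zero ha hb), qTheta_mul_left hq hq0 (div_ne_zero ha hb)]
  field_simp

lemma sigmaQuotient_inv_left (hq : ‖q‖ < 1) {a b : ℂ} (ha : a ≠ 0) (hb : b ≠ 0) :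
    sigmaQuotient q a⁻¹ b = sigmaQuotient q a b := by
  have hmul : a⁻¹ * b = (a / b)⁻¹ := by rw [inv_div, div_eq_inv_mul]
  have hdiv : a⁻¹ / b = (a * b)⁻¹ := by rw [mul_inv, div_eq_mul_inv]
  rw [sigmaQuotient, sigmaQuotient, hmul, hdiv, qTheta_inv hq ha,
    qTheta_inv hq (mul_ne_zero ha hb), qTheta_inv hq (div_ne_zero ha hb)]
  field_simp

lemma differentiableAt_qTheta_mul (hq : ‖q‖ < 1) {a c : ℂ} (ha : a ≠ 0) (hc : c ≠ 0) :
    DifferentiableAt ℂ (fun x => qTheta q (x * c)) a :=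
  DifferentiableAt.comp (g := qTheta q) a (differentiableAt_qTheta hq (mul_ne_zero ha hc))
    (by fun_prop)

lemma differentiableAt_sigmaQuotient (hq : ‖q‖ < 1) {a b : ℂ} (ha : a ≠ 0) (hb : b ≠ 0)
    (hθa : qTheta q a ≠ 0) (hθb : qTheta q b ≠ 0) :
    DifferentiableAt ℂ (fun x => sigmaQuotient q x b) a := by
  have hmul := differentiableAt_qTheta_mul hq ha hb
  have hdiv := differentiableAt_qTheta_mul hq ha (inv_ne_zero hb)
  have hθ := differentiableAt_qTheta hq ha
  have hne : (qTheta q a * qTheta q b) ^ 2 ≠ 0 := pow_ne_zero 2 (mul_ne_zero hθa hθb)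
  simp only [sigmaQuotient, div_eq_mul_inv _ b]
  fun_prop (disch := assumption)

-- Clearing the double pole at `1` leaves a function that vanishes there, so at most a simple pole
-- remains.
lemma tendsto_sub_one_mul_qWeierstrass_sub_sigmaQuotient (hq : ‖q‖ < 1) {b : ℂ}
    (hb : b ≠ 0) (hθb : qTheta q b ≠ 0) :
    Tendsto (fun x => (x - 1) * (qWeierstrass q x - sigmaQuotient q x b)) (𝓝[≠] 1) (𝓝 0) := by
  set T : ℂ → ℂ := fun x => qPochhammer q (q * x) * qPochhammer q (q / x) with hT
  have hT0 {x : ℂ} (hx : x ∈ qAnnulus q) : T x ≠ 0 :=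
    mul_ne_zero (qPochhammer_ne_zero_of_norm_lt_one hq hx.2)
      (qPochhammer_ne_zero_of_norm_lt_one hq (norm_div_lt_one_of_mem_qAnnulus hx))
  set K : ℂ → ℂ := fun x => x + (x - 1) ^ 2 * (koebeSum q (q * x) + koebeSum q (q / x)) +
    b * qPochhammer q q ^ 4 * (qTheta q (x * b) * qTheta q (x * b⁻¹)) / (T x * qTheta q b) ^ 2
    with hK
  have h1 := mem_qAnnulus_of_norm_eq_one hq (norm_one (α := ℂ))
  refine tendsto_sub_one_mul_of_apply_inv (K := K)
    (fun x hx => by rw [qWeierstrass_inv, sigmaQuotient_inv_left hq hx hb]) ?_ ?_ ?_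
  · have hsum := (differentiableOn_koebeSum_add hq).differentiableAt (qAnnulus_mem_nhds_one hq)
    have hmul := differentiableAt_qTheta_mul hq one_ne_zero hb
    have hdiv := differentiableAt_qTheta_mul hq one_ne_zero (inv_ne_zero hb)
    have hTd : DifferentiableAt ℂ T 1 := by
      have := differentiable_qPochhammer hq
      have := one_ne_zero' ℂ
      fun_prop (disch := assumption)
    have hne : (T 1 * qTheta q b) ^ 2 ≠ 0 := pow_ne_zero 2 (mul_ne_zero (hT0 h1) hθb)
    fun_prop (disch := assumption)
  · have hφ := qPochhammer_ne_zero_of_norm_lt_one hq hq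
    simp only [hK, hT, one_mul, mul_one, div_one, sub_self, qTheta_inv hq hb]
    field_simp
    ring
  · filter_upwards [nhdsWithin_le_nhds (qAnnulus_mem_nhds_one hq), self_mem_nhdsWithin]
      with x hx hx1
    have hx1' : 1 - x ≠ 0 := sub_ne_zero.2 (Ne.symm hx1)
    have hTx := hT0 hx
    have hθ : qTheta q x = (1 - x) * T x := qTheta_eq_one_sub_mul hq x
    simp only [hK, qWeierstrass_eq_koebe_add hq hx, koebe, sigmaQuotient, hθ,
      div_eq_mul_inv x b]
    field_simp
    ring

theorem qWeierstrass_sub_qWeierstrass (hq0 : q ≠ 0) (hq : ‖q‖ < 1) {a b : ℂ}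
    (ha0 : a ≠ 0) (ha : ∀ n : ℤ, a ≠ q ^ n) (hb0 : b ≠ 0) (hb : ∀ n : ℤ, b ≠ q ^ n) :
    qWeierstrass q a - qWeierstrass q b = sigmaQuotient q a b := by
  have hθb := qTheta_ne_zero hq hb0 hb
  have hper : ∀ x ≠ 0, qWeierstrass q (q * x) - sigmaQuotient q (q * x) b =
      qWeierstrass q x - sigmaQuotient q x b := fun x hx => by
    rw [qWeierstrass_mul_left hq0, sigmaQuotient_mul_left hq hq0 hx hb0]
  have hdiff : DifferentiableOn ℂ (fun x => qWeierstrass q x - sigmaQuotient q x b)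
      (qAnnulus q \ {1}) := by
    refine (differentiableOn_qWeierstrass hq).sub fun x hx => ?_
    have hx0 := ne_zero_of_mem_qAnnulus hx.1
    exact (differentiableAt_sigmaQuotient hq hx0 hb0
      (qTheta_ne_zero hq hx0 (ne_zpow_of_mem_qAnnulus hq0 hq hx.1 hx.2))
      hθb).differentiableWithinAt
  have hconst := eq_of_apply_mul_of_tendsto hq0 hq hper hdiff
    (tendsto_sub_one_mul_qWeierstrass_sub_sigmaQuotient hq hb0 hθb) ha0 ha hb0 hb
  rw [sigmaQuotient_self hq hb0, sub_zero] at hconst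
  rw [← hconst, sub_sub_cancel]

/-- The term `n qⁿ / (1 - qⁿ)` of the Lambert series of the sum-of-divisors function. It is `0` for
`n = 0`. -/
noncomputable def lambertTerm (q : ℂ) (n : ℕ) : ℂ := n * q ^ n / (1 - q ^ n)

lemma lambertTerm_zero (q : ℂ) : lambertTerm q 0 = 0 := by simp [lambertTerm]

lemma hasSum_lambertTerm_mul_pow (hq : ‖q‖ < 1) {a : ℂ} (ha : ‖q * a‖ < 1) :
    HasSum (fun n : ℕ => lambertTerm q n * a ^ n) (koebeSum q (q * a)) :=
  (hasSum_lambert_koebeSum hq ha).congr_fun fun n => by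
    rw [lambertTerm, mul_pow]
    ring

lemma summable_lambertTerm (hq : ‖q‖ < 1) : Summable (lambertTerm q) := by
  simpa using (hasSum_lambertTerm_mul_pow hq (a := 1) (by simpa using hq)).summable

lemma hasSum_lambertTerm_qWeierstrass (hq : ‖q‖ < 1) {a : ℂ} (ha : a ∈ qAnnulus q) :
    HasSum (fun n : ℕ => lambertTerm q n * (a ^ n + a⁻¹ ^ n)) (qWeierstrass q a - koebe a) := by
  rw [qWeierstrass_eq_koebe_add hq ha, add_sub_cancel_left]
  simp only [mul_add]
  exact (hasSum_lambertTerm_mul_pow hq ha.2).add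
    (hasSum_lambertTerm_mul_pow hq (norm_div_lt_one_of_mem_qAnnulus ha))

/-- The quadratic Gauss sum `∑ (i / 5) ζⁱ` modulo `5`. -/
def gaussSumFive (ζ : ℂ) : ℂ := ζ - ζ ^ 2 - ζ ^ 3 + ζ ^ 4

lemma jacobiSym_five (n : ℕ) : J(n | 5) =
    (if n % 5 = 1 ∨ n % 5 = 4 then 1 else 0) - (if n % 5 = 2 ∨ n % 5 = 3 then 1 else 0) := by
  rw [jacobiSym.mod_left, ← Int.natCast_mod]
  have : n % 5 < 5 := Nat.mod_lt _ (by norm_num)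
  interval_cases n % 5 <;> norm_num

lemma pow_add_inv_pow_sub_eq_jacobiSym_mul {ζ : ℂ} (hζ : ζ ^ 5 = 1) (n : ℕ) :
    ζ ^ n + ζ⁻¹ ^ n - ((ζ ^ 2) ^ n + (ζ ^ 2)⁻¹ ^ n) = J(n | 5) * gaussSumFive ζ := by
  have hinv : ζ⁻¹ = ζ ^ 4 := inv_eq_of_mul_eq_one_right (by linear_combination hζ)
  have hinv_sq : (ζ ^ 2)⁻¹ = ζ ^ 3 := inv_eq_of_mul_eq_one_right (by linear_combination hζ)
  have hmod (k : ℕ) : ζ ^ k = ζ ^ (k % 5) := pow_eq_pow_mod k hζ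
  rw [hinv, hinv_sq, ← pow_mul, ← pow_mul, ← pow_mul, hmod n, hmod (4 * n), hmod (2 * n),
    hmod (3 * n), Nat.mul_mod 4, Nat.mul_mod 2, Nat.mul_mod 3, jacobiSym_five, gaussSumFive]
  have : n % 5 < 5 := Nat.mod_lt _ (by norm_num)
  interval_cases n % 5 <;> norm_num <;> ring

section FifthRoot

variable {ζ : ℂ}

lemma geom_sum_five_eq_zero (hζ : IsPrimitiveRoot ζ 5) : 1 + ζ + ζ ^ 2 + ζ ^ 3 + ζ ^ 4 = 0 := by
  simpa [Finset.sum_range_succ] using hζ.geom_sum_eq_zero (by norm_num)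

lemma one_sub_ne_zero_of_isPrimitiveRoot (hζ : IsPrimitiveRoot ζ 5) : 1 - ζ ≠ 0 :=
  sub_ne_zero.2 (hζ.ne_one (by norm_num)).symm

lemma one_sub_sq_ne_zero_of_isPrimitiveRoot (hζ : IsPrimitiveRoot ζ 5) : 1 - ζ ^ 2 ≠ 0 :=
  sub_ne_zero.2 (hζ.pow_ne_one_of_pos_of_lt (by norm_num) (by norm_num)).symm

lemma gaussSumFive_mul (hζ : IsPrimitiveRoot ζ 5) :
    gaussSumFive ζ * (ζ * (1 - ζ) * (1 - ζ ^ 2)) = 5 := by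
  rw [gaussSumFive]
  linear_combination (-5 + 5 * ζ + ζ ^ 2 - 3 * ζ ^ 3 + ζ ^ 4) * geom_sum_five_eq_zero hζ

lemma koebe_sub_koebe_sq (hζ : IsPrimitiveRoot ζ 5) :
    koebe ζ - koebe (ζ ^ 2) = -(gaussSumFive ζ / 5) := by
  have h0 := hζ.ne_zero (by norm_num)
  have h1 := one_sub_ne_zero_of_isPrimitiveRoot hζ
  have h2 := one_sub_sq_ne_zero_of_isPrimitiveRoot hζ
  have hmul : (koebe ζ - koebe (ζ ^ 2)) * (ζ * (1 - ζ) * (1 - ζ ^ 2)) = -1 := by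
    have hadd : 1 + ζ ≠ 0 := right_ne_zero_of_mul (a := 1 - ζ) (by convert h2 using 1; ring)
    rw [koebe, koebe, show 1 - ζ ^ 2 = (1 - ζ) * (1 + ζ) by ring]
    field_simp
    linear_combination geom_sum_five_eq_zero hζ
  refine mul_right_cancel₀ (mul_ne_zero (mul_ne_zero h0 h1) h2) ?_
  linear_combination hmul + (1 / 5 : ℂ) * gaussSumFive_mul hζ

lemma qTheta_mul_qTheta_sq (hq : ‖q‖ < 1) (hζ : IsPrimitiveRoot ζ 5) :
    qTheta q ζ * qTheta q (ζ ^ 2) * qPochhammer q q =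
      (1 - ζ) * (1 - ζ ^ 2) * qPochhammer (q ^ 5) (q ^ 5) := by
  have hdiv : q / ζ = ζ ^ 4 * q := by
    rw [div_eq_iff (hζ.ne_zero (by norm_num))]
    linear_combination -q * hζ.pow_eq_one
  have hdiv_sq : q / ζ ^ 2 = ζ ^ 3 * q := by
    rw [div_eq_iff (pow_ne_zero 2 (hζ.ne_zero (by norm_num)))]
    linear_combination -q * hζ.pow_eq_one
  have hprod := prod_qPochhammer_mul_root hq (by norm_num) hζ q
  simp only [Finset.prod_range_succ, Finset.prod_range_zero, pow_zero, pow_one, one_mul] at hprod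
  rw [qTheta_eq_one_sub_mul hq, qTheta_eq_one_sub_mul hq, hdiv, hdiv_sq, mul_comm q, mul_comm q,
    ← hprod]
  ring

lemma sigmaQuotient_sq_right (hq : ‖q‖ < 1) (hζ : IsPrimitiveRoot ζ 5) :
    sigmaQuotient q ζ (ζ ^ 2) =
      -(gaussSumFive ζ / 5 * (qPochhammer q q ^ 5 / qPochhammer (q ^ 5) (q ^ 5))) := by
  have h0 := hζ.ne_zero (by norm_num)
  have h1 := one_sub_ne_zero_of_isPrimitiveRoot hζ
  have h2 := one_sub_sq_ne_zero_of_isPrimitiveRoot hζ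
  have hφ := qPochhammer_ne_zero_of_norm_lt_one hq hq
  have hφ' : qPochhammer (q ^ 5) (q ^ 5) ≠ 0 :=
    have : ‖q ^ 5‖ < 1 := by
      rw [norm_pow]
      exact pow_lt_one₀ (norm_nonneg q) hq (by norm_num)
    qPochhammer_ne_zero_of_norm_lt_one this this
  have hθ := qTheta_mul_qTheta_sq hq hζ
  have hθ0 : qTheta q ζ * qTheta q (ζ ^ 2) ≠ 0 :=
    left_ne_zero_of_mul (hθ ▸ mul_ne_zero (mul_ne_zero h1 h2) hφ')
  have hmul : ζ * ζ ^ 2 = (ζ ^ 2)⁻¹ := eq_inv_of_mul_eq_one_left (by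
    linear_combination hζ.pow_eq_one)
  have hdiv : ζ / ζ ^ 2 = ζ⁻¹ := by field_simp
  have hunit : sigmaQuotient q ζ (ζ ^ 2) =
      -ζ⁻¹ * qPochhammer q q ^ 4 / (qTheta q ζ * qTheta q (ζ ^ 2)) := by
    rw [sigmaQuotient, hmul, hdiv, qTheta_inv hq h0, qTheta_inv hq (pow_ne_zero 2 h0)]
    have := left_ne_zero_of_mul hθ0
    have := right_ne_zero_of_mul hθ0
    field_simp
  rw [hunit, eq_div_of_mul_eq hφ hθ]
  field_simp
  linear_combination gaussSumFive_mul hζ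

lemma gaussSumFive_ne_zero (hζ : IsPrimitiveRoot ζ 5) : gaussSumFive ζ ≠ 0 :=
  left_ne_zero_of_mul (ne_of_eq_of_ne (gaussSumFive_mul hζ) (by norm_num))

theorem qWeierstrass_sub_koebe_sub_sq (hq0 : q ≠ 0) (hq : ‖q‖ < 1) (hζ : IsPrimitiveRoot ζ 5) :
    qWeierstrass q ζ - koebe ζ - (qWeierstrass q (ζ ^ 2) - koebe (ζ ^ 2)) =
      (1 - qPochhammer q q ^ 5 / qPochhammer (q ^ 5) (q ^ 5)) / 5 * gaussSumFive ζ := by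
  have hmem := mem_qAnnulus_of_norm_eq_one hq (hζ.norm'_eq_one (by norm_num))
  have hmem_sq := mem_qAnnulus_of_norm_eq_one hq (x := ζ ^ 2) (by
    rw [norm_pow, hζ.norm'_eq_one (by norm_num), one_pow])
  rw [sub_sub_sub_comm, koebe_sub_koebe_sq hζ, qWeierstrass_sub_qWeierstrass hq0 hq
    (ne_zero_of_mem_qAnnulus hmem)
    (ne_zpow_of_mem_qAnnulus hq0 hq hmem (hζ.ne_one (by norm_num)))
    (ne_zero_of_mem_qAnnulus hmem_sq)
    (ne_zpow_of_mem_qAnnulus hq0 hq hmem_sq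
      (hζ.pow_ne_one_of_pos_of_lt (by norm_num) (by norm_num))),
    sigmaQuotient_sq_right hq hζ]
  ring

end FifthRoot

theorem hasSum_jacobiSym_five_mul_lambertTerm (hq : ‖q‖ < 1) :
    HasSum (fun n : ℕ => J(n | 5) * lambertTerm q n)
      ((1 - qPochhammer q q ^ 5 / qPochhammer (q ^ 5) (q ^ 5)) / 5) := by
  rcases eq_or_ne q 0 with rfl | hq0
  · have hterm (n : ℕ) : lambertTerm 0 n = 0 := by cases n <;> simp [lambertTerm]
    simp [hterm, qPochhammer, hasSum_zero]
  set ζ := Complex.exp (2 * Real.pi * Complex.I / 5)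
  have hζ : IsPrimitiveRoot ζ 5 := Complex.isPrimitiveRoot_exp 5 (by norm_num)
  have hnorm : ‖ζ‖ = 1 := hζ.norm'_eq_one (by norm_num)
  have hsum := (hasSum_lambertTerm_qWeierstrass hq (mem_qAnnulus_of_norm_eq_one hq hnorm)).sub
    (hasSum_lambertTerm_qWeierstrass hq (a := ζ ^ 2)
      (mem_qAnnulus_of_norm_eq_one hq (by rw [norm_pow, hnorm, one_pow])))
  rw [qWeierstrass_sub_koebe_sub_sq hq0 hq hζ] at hsum
  refine (hasSum_mul_right_iff (gaussSumFive_ne_zero hζ)).1 (hsum.congr_fun fun n => ?_)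
  rw [← mul_sub, pow_add_inv_pow_sub_eq_jacobiSym_mul hζ.pow_eq_one]
  ring

lemma summable_ite_lambertTerm_succ (hq : ‖q‖ < 1) (p : ℕ → Prop) [DecidablePred p] :
    Summable fun n : ℕ => if p (n + 1) then lambertTerm q (n + 1) else 0 := by
  simpa only [Set.indicator_apply, Set.mem_ofPred_eq] using
    (summable_nat_add_iff 1).2 ((summable_lambertTerm hq).indicator {n | p n})

theorem tsum_lambertTerm_sub_tsum_lambertTerm (hq : ‖q‖ < 1) :
    (∑' n : ℕ, if (n + 1) % 5 = 1 ∨ (n + 1) % 5 = 4 then lambertTerm q (n + 1) else 0) -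
        ∑' n : ℕ, (if (n + 1) % 5 = 2 ∨ (n + 1) % 5 = 3 then lambertTerm q (n + 1) else 0) =
      (1 - qPochhammer q q ^ 5 / qPochhammer (q ^ 5) (q ^ 5)) / 5 := by
  rw [← (summable_ite_lambertTerm_succ hq fun n => n % 5 = 1 ∨ n % 5 = 4).tsum_sub
    (summable_ite_lambertTerm_succ hq fun n => n % 5 = 2 ∨ n % 5 = 3)]
  have hsum := (hasSum_nat_add_iff' 1).2 (hasSum_jacobiSym_five_mul_lambertTerm hq)
  rw [Finset.sum_range_one, lambertTerm_zero, mul_zero, sub_zero] at hsum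
  refine (hsum.congr_fun fun n => ?_).tsum_eq
  rw [jacobiSym_five]
  push_cast
  rw [sub_mul, ite_mul, ite_mul, one_mul, zero_mul]

lemma lambertTerm_succ (q : ℂ) (n : ℕ) :
    lambertTerm q (n + 1) = ((n : ℂ) + 1) * q ^ (n + 1) / (1 - q ^ (n + 1)) := by
  rw [lambertTerm, Nat.cast_succ]

lemma tprod_one_sub_pow_succ (q : ℂ) : ∏' n : ℕ, (1 - q ^ (n + 1)) = qPochhammer q q := by
  simp only [qPochhammer, pow_succ']

end Development

/-- The `k = 2` case of the determinant identity is Ramanujan's modulus 5 identity: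
`A₂(q) - A₁(q) = (-1/5)(q;q)_∞⁵/(q⁵;q⁵)_∞`, where
`A₁ = 11/60 + ∑_{n≡±2 (5)} nqⁿ/(1-qⁿ)` and `A₂ = -1/60 + ∑_{n≡±1 (5)} nqⁿ/(1-qⁿ)`. -/
theorem mod5_determinant_case (A₁ A₂ : ℂ → ℂ)
    (hA₁ : A₁ = fun q : ℂ => 11 / 60 + ∑' n : ℕ,
      if (n + 1) % 5 = 2 ∨ (n + 1) % 5 = 3 then
        ((n : ℂ) + 1) * q ^ (n + 1) / (1 - q ^ (n + 1)) else 0)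
    (hA₂ : A₂ = fun q : ℂ => -(1 / 60) + ∑' n : ℕ,
      if (n + 1) % 5 = 1 ∨ (n + 1) % 5 = 4 then
        ((n : ℂ) + 1) * q ^ (n + 1) / (1 - q ^ (n + 1)) else 0)
    (q : ℂ) (hq : ‖q‖ < 1) :
    A₂ q - A₁ q
      = -(1 / 5) * (∏' n : ℕ, (1 - q ^ (n + 1))) ^ 5 / ∏' n : ℕ, (1 - (q ^ 5) ^ (n + 1)) := by
  subst hA₁ hA₂
  simp only [← lambertTerm_succ, tprod_one_sub_pow_succ]
  linear_combination tsum_lambertTerm_sub_tsum_lambertTerm hq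
end
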